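/- arXiv:1210.8223 — 2 statements merged into one kernel-verified Lean document; each statement's English description precedes it below -/
import Mathlib

section
/- For every positive integer n, there exists an n×n array A with entries in {1,...,n} such that every row of A is a permutation of {1,...,n}, and for every i with 1 ≤ i ≤ n, the i × ⌈n/i⌉ rectangle in the upper left corner of A contains all n symbols, and likewise for the upper right, lower left, and lower right corners. -/
/-- Hermite identity. -/
lemma hermite_sum (n k : ℕ) (hk : 0 < k) : ∑ r ∈ Finset.range k, (n + r) / k = n := by
  induction n with
  | zero =>
    apply Finset.sum_eq_zero
    intro r hr
    rw [Finset.mem_range] at hr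
    rw [Nat.zero_add]
    exact Nat.div_eq_of_lt hr
  | succ n ih =>
    have h1 := Finset.sum_range_succ (fun r => (n + r) / k) k
    have h2 := Finset.sum_range_succ' (fun r => (n + r) / k) k
    have h3 : (n + k) / k = n / k + 1 := Nat.add_div_right n hk
    have h4 : ∑ r ∈ Finset.range k, (n + 1 + r) / k
        = ∑ r ∈ Finset.range k, (n + (r + 1)) / k := by
      apply Finset.sum_congr rfl
      intro r _
      congr 1
      omega
    simp only [Nat.add_zero] at h2
    omega

lemma target_sum (n k : ℕ) (hk : 0 < k) :
    ∑ r ∈ Finset.Icc 1 k, (n + k - r) / k = n := by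
  conv_rhs => rw [← hermite_sum n k hk]
  refine Finset.sum_bij' (fun r _ => k - r) (fun r _ => k - r) ?_ ?_ ?_ ?_ ?_
  all_goals simp only [Finset.mem_Icc, Finset.mem_range]
  all_goals intro a ha
  · omega
  · omega
  · omega
  · omega
  · congr 1; omega

/-- Hall-type lemma: if every point lies in at most two of the sets, one can choose disjoint halves. -/
lemma disjoint_halves {V α : Type} [DecidableEq V] [DecidableEq α] [Fintype V]
    (S : V → Finset α) (d : V → ℕ) (hd : ∀ v, 2 * d v ≤ (S v).card)
    (h2 : ∀ a, (Finset.univ.filter (fun v => a ∈ S v)).card ≤ 2) :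
    ∃ F : V → Finset α, (∀ v, F v ⊆ S v) ∧ (∀ v, (F v).card = d v) ∧
      ∀ v w, v ≠ w → Disjoint (F v) (F w) := by
  have hall : ∀ T : Finset (Σ v, Fin (d v)), T.card ≤ (T.biUnion (fun x => S x.1)).card := by
    intro T
    set U := T.image Sigma.fst with hU
    have h1 : T.card ≤ ∑ v ∈ U, d v := by
      have : T ⊆ U.sigma (fun v => (Finset.univ : Finset (Fin (d v)))) := by
        intro x hx
        simp only [Finset.mem_sigma, Finset.mem_univ, and_true, hU]
        exact Finset.mem_image_of_mem _ hx
      have := Finset.card_le_card this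
      simpa using this
    have h3 : T.biUnion (fun x => S x.1) = U.biUnion S := by
      rw [hU, Finset.image_biUnion]
    rw [h3]
    have h4 : ∑ v ∈ U, (S v).card ≤ 2 * (U.biUnion S).card := by
      have e1 : ∀ v ∈ U, (S v).card = ((U.biUnion S).filter (fun a => a ∈ S v)).card := by
        intro v hv
        congr 1
        ext a
        simp only [Finset.mem_filter, Finset.mem_biUnion]
        exact ⟨fun h => ⟨⟨v, hv, h⟩, h⟩, fun h => h.2⟩
      rw [Finset.sum_congr rfl e1]
      have e2 := Finset.sum_card_bipartiteAbove_eq_sum_card_bipartiteBelow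
        (s := U) (t := U.biUnion S) (fun v a => a ∈ S v)
      simp only [Finset.bipartiteAbove, Finset.bipartiteBelow] at e2
      rw [e2]
      calc _ ≤ ∑ a ∈ U.biUnion S, 2 := by
            apply Finset.sum_le_sum
            intro a _
            refine le_trans (Finset.card_le_card ?_) (h2 a)
            exact Finset.filter_subset_filter _ (Finset.subset_univ _)
        _ = _ := by simp [mul_comm]
    have h5 : ∑ v ∈ U, 2 * d v ≤ ∑ v ∈ U, (S v).card := Finset.sum_le_sum (fun v _ => hd v)
    rw [← Finset.mul_sum] at h5
    omega
  obtain ⟨f, hf, hfS⟩ := (Finset.all_card_le_biUnion_card_iff_exists_injective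
    (fun x : (Σ v, Fin (d v)) => S x.1)).1 hall
  refine ⟨fun v => Finset.univ.image (fun k : Fin (d v) => f ⟨v, k⟩), ?_, ?_, ?_⟩
  · intro v a ha
    simp only [Finset.mem_image, Finset.mem_univ, true_and] at ha
    obtain ⟨k, rfl⟩ := ha
    exact hfS ⟨v, k⟩
  · intro v
    rw [Finset.card_image_of_injective]
    · simp
    · intro a b hab
      have := hf hab
      simpa using this
  · intro v w hvw
    rw [Finset.disjoint_left]
    intro a ha hb
    simp only [Finset.mem_image, Finset.mem_univ, true_and] at ha hb
    obtain ⟨k, rfl⟩ := ha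
    obtain ⟨l, hl⟩ := hb
    have := hf hl
    exact hvw (congrArg Sigma.fst this).symm

/-- number of symbols in row `r` -/
def fibc {n : ℕ} (L : Fin n → ℕ) (r : ℕ) : ℕ := (Finset.univ.filter (fun s => L s = r)).card

lemma fibc_sum {n : ℕ} (L : Fin n → ℕ) (j : ℕ) (hL : ∀ s, 1 ≤ L s ∧ L s ≤ j) :
    ∑ r ∈ Finset.Icc 1 j, fibc L r = n := by
  have := Finset.card_eq_sum_card_fiberwise (s := (Finset.univ : Finset (Fin n)))
    (t := Finset.Icc 1 j) (f := L) (fun s _ => by simpa using hL s)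
  simpa [fibc] using this.symm

lemma eject_step {n : ℕ} (L R : Fin n → ℕ) (j : ℕ) (t : ℕ → ℕ)
    (hL : ∀ s, 1 ≤ L s ∧ L s ≤ j) (hR : ∀ s, 1 ≤ R s ∧ R s ≤ j)
    (hLt : ∀ r ∈ Finset.Icc 1 j, t r ≤ fibc L r ∧ fibc L r ≤ 2 * t r)
    (hRt : ∀ r ∈ Finset.Icc 1 j, t r ≤ fibc R r ∧ fibc R r ≤ 2 * t r) :
    ∃ L' R' : Fin n → ℕ,
      (∀ s, L' s = L s ∨ L' s = j + 1) ∧ (∀ s, R' s = R s ∨ R' s = j + 1) ∧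
      (∀ s, ¬ (L' s = j + 1 ∧ R' s = j + 1)) ∧
      (∀ r ∈ Finset.Icc 1 j, fibc L' r = t r) ∧ (∀ r ∈ Finset.Icc 1 j, fibc R' r = t r) := by
  classical
  let f : Bool → Fin n → ℕ := fun b => if b then L else R
  have hft : ∀ b, ∀ r ∈ Finset.Icc 1 j, t r ≤ fibc (f b) r ∧ fibc (f b) r ≤ 2 * t r := by
    intro b; cases b
    · exact hRt
    · exact hLt
  have hf : ∀ b s, 1 ≤ f b s ∧ f b s ≤ j := by
    intro b; cases b
    · exact hR
    · exact hL
  obtain ⟨F, hFS, hFc, hFd⟩ := disjoint_halves (V := Bool × Finset.Icc 1 j) (α := Fin n)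
    (fun v => Finset.univ.filter (fun s => f v.1 s = v.2.1))
    (fun v => fibc (f v.1) v.2.1 - t v.2.1)
    (by
      rintro ⟨b, r, hr⟩
      have := hft b r hr
      change 2 * (fibc (f b) r - t r) ≤ fibc (f b) r
      omega)
    (by
      intro a
      refine le_trans (Finset.card_le_card_of_injOn (t := (Finset.univ : Finset Bool)) Prod.fst
        (fun _ _ => by simp) ?_) (by simp)
      rintro ⟨b, r, hr⟩ h1 ⟨b', r', hr'⟩ h2 h
      simp only [Finset.coe_filter, Finset.mem_filter, Finset.mem_univ, true_and,
        Set.mem_ofPred_eq] at h1 h2 h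
      subst h
      subst h1
      subst h2
      rfl)
  let g : Bool → Fin n → ℕ := fun b s => if ∃ v : Finset.Icc 1 j, s ∈ F (b, v) then j + 1 else f b s
  have hgc : ∀ b, ∀ r ∈ Finset.Icc 1 j, fibc (g b) r = t r := by
    intro b r hr
    have e : Finset.univ.filter (fun s => g b s = r)
        = (Finset.univ.filter (fun s => f b s = r)) \ F (b, ⟨r, hr⟩) := by
      ext s
      simp only [Finset.mem_filter, Finset.mem_univ, true_and, Finset.mem_sdiff, g]
      have hr' := Finset.mem_Icc.1 hr
      split_ifs with h
      · obtain ⟨v, hv⟩ := h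
        have h1 := hFS _ hv
        simp only [Finset.mem_filter, Finset.mem_univ, true_and] at h1
        constructor
        · intro h; omega
        · rintro ⟨h2, h3⟩
          exfalso
          apply h3
          have : v = ⟨r, hr⟩ := Subtype.ext (h1.symm.trans h2)
          rwa [this] at hv
      · constructor
        · intro h2
          exact ⟨h2, fun h3 => h ⟨_, h3⟩⟩
        · exact fun h => h.1
    unfold fibc
    rw [e, Finset.card_sdiff_of_subset (hFS (b, ⟨r, hr⟩)), hFc]
    have := hft b r hr
    change fibc (f b) r - (fibc (f b) r - t r) = t r
    omega
  refine ⟨g true, g false, ?_, ?_, ?_, hgc true, hgc false⟩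
  · intro s
    by_cases h : ∃ v : Finset.Icc 1 j, s ∈ F (true, v)
    · right; simp only [g, if_pos h]
    · left; simp only [g, if_neg h]; rfl
  · intro s
    by_cases h : ∃ v : Finset.Icc 1 j, s ∈ F (false, v)
    · right; simp only [g, if_pos h]
    · left; simp only [g, if_neg h]; rfl
  · rintro s ⟨h1, h2⟩
    have k : ∀ b, g b s = j + 1 → ∃ v : Finset.Icc 1 j, s ∈ F (b, v) := by
      intro b hb
      by_contra h
      simp only [g, if_neg h] at hb
      have := hf b s
      omega
    obtain ⟨v, hv⟩ := k _ h1
    obtain ⟨w, hw⟩ := k _ h2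
    exact Finset.disjoint_left.1 (hFd (true, v) (false, w) (by simp)) hv hw

/-- One-sided stage data. -/
structure Side (n h : ℕ) (L : ℕ → Fin n → ℕ) : Prop where
  rng : ∀ j, 2 ≤ j → j ≤ h → ∀ s, 1 ≤ L j s ∧ L j s ≤ j
  stp : ∀ j, 2 ≤ j → j < h → ∀ s, L (j + 1) s = L j s ∨ L (j + 1) s = j + 1
  fib2 : ∀ r ∈ Finset.Icc 1 2, n / 2 ≤ fibc (L 2) r ∧ fibc (L 2) r ≤ (n + 1) / 2
  fib : ∀ j, 3 ≤ j → j ≤ h → ∀ r ∈ Finset.Icc 1 j, fibc (L j) r = (n + j - r) / j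

lemma half_lt_card (n : ℕ) : (Finset.univ.filter (fun s : Fin n => s.1 < n / 2)).card = n / 2 := by
  rw [Fin.card_filter_val_lt]
  omega

lemma base_side (n : ℕ) (L : ℕ → Fin n → ℕ) (hr : ∀ s, L 2 s = 1 ∨ L 2 s = 2)
    (hc : fibc (L 2) 1 = n / 2 ∨ fibc (L 2) 2 = n / 2) : Side n 2 L := by
  have hb : ∀ s, 1 ≤ L 2 s ∧ L 2 s ≤ 2 := by
    intro s
    rcases hr s with h | h <;> omega
  have hs := fibc_sum (L 2) 2 hb
  rw [show Finset.Icc 1 2 = {1, 2} from rfl] at hs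
  rw [Finset.sum_pair (by norm_num)] at hs
  refine ⟨?_, ?_, ?_, ?_⟩
  · intro j h1 h2
    obtain rfl : j = 2 := by omega
    exact hb
  · intro j h1 h2; omega
  · intro r hr
    rw [Finset.mem_Icc] at hr
    have : r = 1 ∨ r = 2 := by omega
    rcases this with rfl | rfl <;> omega
  · intro j h1 h2; omega

lemma target_ineq (n j r : ℕ) (h1 : 1 ≤ r) (h2 : r ≤ j) (hj : 1 ≤ j) (hn : j ≤ n) :
    (n + (j + 1) - r) / (j + 1) ≤ (n + j - r) / j ∧
      (n + j - r) / j ≤ 2 * ((n + (j + 1) - r) / (j + 1)) := by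
  obtain ⟨N, rfl⟩ : ∃ N, n = N + r := ⟨n - r, by omega⟩
  rw [show N + r + (j + 1) - r = N + (j + 1) by omega, show N + r + j - r = N + j by omega,
    Nat.add_div_right _ (by omega), Nat.add_div_right _ (by omega)]
  constructor
  · have := Nat.div_le_div_left (a := N) (show j ≤ j + 1 by omega) (by omega)
    omega
  · have h3 : N < (N / (j + 1) + 1) * (j + 1) := by
      have := Nat.lt_mul_div_succ N (show 0 < j + 1 by omega)
      nlinarith
    have h4 : N / j < 2 * (N / (j + 1)) + 2 := by
      rw [Nat.div_lt_iff_lt_mul (by omega)]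
      nlinarith
    omega

lemma step_bounds (n j : ℕ) (hn : 4 ≤ n) (hj : 2 ≤ j) (hjn : j ≤ n) (L : ℕ → Fin n → ℕ)
    (hS : Side n j L) : ∀ r ∈ Finset.Icc 1 j, (n + (j + 1) - r) / (j + 1) ≤ fibc (L j) r ∧
      fibc (L j) r ≤ 2 * ((n + (j + 1) - r) / (j + 1)) := by
  intro r hr
  have hr' := Finset.mem_Icc.1 hr
  by_cases h : j = 2
  · subst h
    have := hS.fib2 r hr
    have : r = 1 ∨ r = 2 := by omega
    rcases this with rfl | rfl <;> omega
  · rw [hS.fib j (by omega) le_rfl r hr]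
    exact target_ineq n j r hr'.1 hr'.2 (by omega) hjn

lemma extend_side (n j : ℕ) (hj : 2 ≤ j) (L : ℕ → Fin n → ℕ) (L' : Fin n → ℕ)
    (hS : Side n j L) (h1 : ∀ s, L' s = L j s ∨ L' s = j + 1)
    (h2 : ∀ r ∈ Finset.Icc 1 j, fibc L' r = (n + (j + 1) - r) / (j + 1)) :
    Side n (j + 1) (Function.update L (j + 1) L') := by
  have hne : ∀ i, i ≤ j → Function.update L (j + 1) L' i = L i := by
    intro i hi
    exact Function.update_of_ne (by omega) _ _
  have heq : Function.update L (j + 1) L' (j + 1) = L' := Function.update_self _ _ _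
  have hrng : ∀ s, 1 ≤ L' s ∧ L' s ≤ j + 1 := by
    intro s
    have := hS.rng j hj le_rfl s
    rcases h1 s with h | h <;> omega
  refine ⟨?_, ?_, ?_, ?_⟩
  · intro i hi1 hi2
    by_cases h : i ≤ j
    · rw [hne i h]; exact hS.rng i hi1 h
    · obtain rfl : i = j + 1 := by omega
      rw [heq]; exact hrng
  · intro i hi1 hi2
    by_cases h : i < j
    · rw [hne i h.le, hne (i + 1) h]; exact hS.stp i hi1 h
    · obtain rfl : i = j := by omega
      rw [heq, hne i le_rfl]; exact h1
  · rw [hne 2 hj]; exact hS.fib2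
  · intro i hi1 hi2
    by_cases h : i ≤ j
    · rw [hne i h]; exact hS.fib i hi1 h
    · obtain rfl : i = j + 1 := by omega
      rw [heq]
      intro r hr
      have hr' := Finset.mem_Icc.1 hr
      by_cases hrj : r ≤ j
      · exact h2 r (Finset.mem_Icc.2 ⟨hr'.1, hrj⟩)
      · obtain rfl : r = j + 1 := by omega
        have e1 := fibc_sum L' (j + 1) hrng
        have e2 := target_sum n (j + 1) (by omega)
        rw [Finset.sum_Icc_succ_top (by omega)] at e1 e2
        rw [Finset.sum_congr rfl h2] at e1
        omega

lemma stages (n : ℕ) (hn : 4 ≤ n) (h : ℕ) (h2 : 2 ≤ h) (hh : h ≤ n) :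
    ∃ L R : ℕ → Fin n → ℕ, Side n h L ∧ Side n h R ∧
      (∀ j, 2 ≤ j → j ≤ h → ∀ s, ¬ (L j s = j ∧ R j s = j)) ∧
      (∀ s, ¬ (L 2 s = 1 ∧ R 2 s = 1)) := by
  induction h, h2 using Nat.le_induction with
  | base =>
    refine ⟨fun _ s => if s.1 < n / 2 then 1 else 2, fun _ s => if s.1 < n / 2 then 2 else 1,
      base_side _ _ ?_ ?_, base_side _ _ ?_ ?_, ?_, ?_⟩
    · intro s; split_ifs <;> simp
    · left
      refine Eq.trans ?_ (half_lt_card n)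
      unfold fibc
      congr 1
      ext s
      by_cases h : s.1 < n / 2 <;> simp [h]
    · intro s; split_ifs <;> simp
    · right
      refine Eq.trans ?_ (half_lt_card n)
      unfold fibc
      congr 1
      ext s
      by_cases h : s.1 < n / 2 <;> simp [h]
    · intro j h1 h2 s
      obtain rfl : j = 2 := by omega
      dsimp only; split_ifs <;> simp
    · intro s
      dsimp only; split_ifs <;> simp
  | succ j hj ih =>
    obtain ⟨L, R, hL, hR, hd, hd2⟩ := ih (by omega)
    obtain ⟨L', R', a1, a2, a3, a4, a5⟩ := eject_step (L j) (R j) j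
      (fun r => (n + (j + 1) - r) / (j + 1)) (hL.rng j hj le_rfl) (hR.rng j hj le_rfl)
      (step_bounds n j hn hj (by omega) L hL) (step_bounds n j hn hj (by omega) R hR)
    refine ⟨_, _, extend_side n j hj L L' hL a1 a4, extend_side n j hj R R' hR a2 a5, ?_, ?_⟩
    · intro i hi1 hi2
      by_cases h : i ≤ j
      · rw [Function.update_of_ne (by omega), Function.update_of_ne (by omega)]
        exact hd i hi1 h
      · obtain rfl : i = j + 1 := by omega
        rw [Function.update_self, Function.update_self]
        exact a3
    · rw [Function.update_of_ne (by omega), Function.update_of_ne (by omega)]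
      exact hd2

lemma sort_upper {n : ℕ} (k : Fin n → ℤ) (X : Finset (Fin n))
    (hX : ∀ s ∈ X, ∀ s', k s' ≤ k s → s' ∈ X) (s : Fin n) (hs : s ∈ X) :
    ((Tuple.sort k).symm s).1 < X.card := by
  have hm := Tuple.monotone_sort k
  set p := (Tuple.sort k).symm s with hp
  have h1 : (Finset.Iic p).card ≤ X.card := by
    refine Finset.card_le_card_of_injOn (Tuple.sort k) ?_ (Tuple.sort k).injective.injOn
    intro q hq
    have hq' : q ≤ p := by simpa using hq
    refine hX s hs _ ?_
    have := hm hq'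
    simpa [hp] using this
  rw [Fin.card_Iic] at h1
  omega

lemma sort_lower {n : ℕ} (k : Fin n → ℤ) (X : Finset (Fin n))
    (hX : ∀ s ∈ X, ∀ s', k s ≤ k s' → s' ∈ X) (s : Fin n) (hs : s ∈ X) :
    n - 1 - ((Tuple.sort k).symm s).1 < X.card := by
  have hm := Tuple.monotone_sort k
  set p := (Tuple.sort k).symm s with hp
  have h1 : (Finset.Ici p).card ≤ X.card := by
    refine Finset.card_le_card_of_injOn (Tuple.sort k) ?_ (Tuple.sort k).injective.injOn
    intro q hq
    have hq' : p ≤ q := by simpa using hq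
    refine hX s hs _ ?_
    have := hm hq'
    simpa [hp] using this
  rw [Fin.card_Ici] at h1
  have := p.2
  omega

lemma side_back {n h : ℕ} {L : ℕ → Fin n → ℕ} (hL : Side n h L) (r a j : ℕ) (ha : 2 ≤ a)
    (hr : r ≤ a) (haj : a ≤ j) (hj : j ≤ h) (s : Fin n) (hs : L j s = r) : L a s = r := by
  induction j, haj using Nat.le_induction with
  | base => exact hs
  | succ j haj ih =>
    apply ih (by omega)
    rcases hL.stp j (by omega) (by omega) s with e | e <;> omega

/-- lifetime of symbol `s` in row `r` -/
def life {n : ℕ} (h : ℕ) (L : ℕ → Fin n → ℕ) (r : ℕ) (s : Fin n) : ℕ :=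
  ((Finset.Icc (max r 2) h).filter (fun j => L j s = r)).card

lemma life_upper {n h : ℕ} {L R : ℕ → Fin n → ℕ} (hL : Side n h L) (hR : Side n h R) (r : ℕ)
    (hd : ∀ s, ¬ (L (max r 2) s = r ∧ R (max r 2) s = r)) (j : ℕ) (hj1 : max r 2 ≤ j) (hj : j ≤ h)
    (s s' : Fin n) (hs : L j s = r)
    (hk : (life h L r s : ℤ) - life h R r s ≤ (life h L r s' : ℤ) - life h R r s') :
    L j s' = r := by
  have ha : 2 ≤ max r 2 := le_max_right _ _
  have hra : r ≤ max r 2 := le_max_left _ _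
  have hla := side_back hL r _ j ha hra hj1 hj s hs
  have hR0 : life h R r s = 0 := by
    unfold life
    rw [Finset.card_eq_zero, Finset.filter_eq_empty_iff]
    intro i hi e
    have hi' := Finset.mem_Icc.1 hi
    exact hd s ⟨hla, side_back hR r _ i ha hra hi'.1 hi'.2 s e⟩
  have hL1 : j + 1 - max r 2 ≤ life h L r s := by
    rw [← Nat.card_Icc]
    apply Finset.card_le_card
    intro i hi
    have hi' := Finset.mem_Icc.1 hi
    simp only [Finset.mem_filter, Finset.mem_Icc]
    exact ⟨⟨hi'.1, by omega⟩, side_back hL r i j (by omega) (by omega) hi'.2 hj s hs⟩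
  by_contra hne
  have hL2 : life h L r s' ≤ j - max r 2 := by
    have : (Finset.Ico (max r 2) j).card = j - max r 2 := Nat.card_Ico _ _
    rw [← this]
    apply Finset.card_le_card
    intro i hi
    simp only [Finset.mem_filter, Finset.mem_Icc] at hi
    rw [Finset.mem_Ico]
    refine ⟨hi.1.1, ?_⟩
    by_contra hij
    exact hne (side_back hL r j i (by omega) (by omega) (by omega) hi.1.2 s' hi.2)
  omega

/-- The rows of the top half. -/
lemma top_rows (n : ℕ) (hn : 4 ≤ n) (h : ℕ) (h2 : 2 ≤ h) (hh : h ≤ n) :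
    ∃ L R : ℕ → Fin n → ℕ, Side n h L ∧ Side n h R ∧
      ∃ σ : ℕ → Equiv.Perm (Fin n),
        (∀ j, 2 ≤ j → j ≤ h → ∀ s, ((σ (L j s)).symm s).1 < fibc (L j) (L j s)) ∧
        (∀ j, 2 ≤ j → j ≤ h → ∀ s, n - 1 - ((σ (R j s)).symm s).1 < fibc (R j) (R j s)) := by
  obtain ⟨L, R, hL, hR, hd, hd2⟩ := stages n hn h h2 hh
  have hdd : ∀ r, 1 ≤ r → r ≤ h → ∀ s, ¬ (L (max r 2) s = r ∧ R (max r 2) s = r) := by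
    intro r h1 hrh
    by_cases h : r = 1
    · subst h; exact hd2
    · rw [max_eq_left (by omega)]
      exact hd r (by omega) hrh
  refine ⟨L, R, hL, hR,
    fun r => Tuple.sort (fun s => (life h R r s : ℤ) - life h L r s), ?_, ?_⟩
  · intro j hj1 hj s
    have hr := hL.rng j hj1 hj s
    apply sort_upper
    · intro u hu v huv
      simp only [Finset.mem_filter, Finset.mem_univ, true_and] at hu ⊢
      refine life_upper hL hR _ (hdd _ hr.1 (by omega)) j (by omega) hj u v hu ?_
      omega
    · simp
  · intro j hj1 hj s
    have hr := hR.rng j hj1 hj s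
    apply sort_lower
    · intro u hu v huv
      simp only [Finset.mem_filter, Finset.mem_univ, true_and] at hu ⊢
      refine life_upper hR hL _ (fun s hs => hdd _ hr.1 (by omega) s hs.symm) j (by omega) hj u v hu ?_
      omega
    · simp

/-- Swap of the first two and of the last two positions. -/
def swf (n x : ℕ) : ℕ :=
  if x = 0 then 1 else if x = 1 then 0 else if x = n - 1 then n - 2 else if x = n - 2 then n - 1 else x

lemma swf_lt (n : ℕ) (hn : 4 ≤ n) (x : ℕ) (hx : x < n) : swf n x < n := by
  unfold swf; split_ifs <;> omega

lemma swf_swf (n : ℕ) (hn : 4 ≤ n) (x : ℕ) (hx : x < n) : swf n (swf n x) = x := by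
  unfold swf; grind

lemma swf_rev (n : ℕ) (hn : 4 ≤ n) (x : ℕ) (hx : x < n) : swf n (n - 1 - x) = n - 1 - swf n x := by
  unfold swf; split_ifs <;> omega

lemma swf_small (n : ℕ) (w : ℕ) (h1 : 2 ≤ w) (h2 : w ≤ n - 2) (x : ℕ) (hx : x < w) :
    swf n x < w := by
  unfold swf; split_ifs <;> omega

/-- The swap as a permutation. -/
def swp (n : ℕ) (hn : 4 ≤ n) : Equiv.Perm (Fin n) where
  toFun x := ⟨swf n x.1, swf_lt n hn x.1 x.2⟩
  invFun x := ⟨swf n x.1, swf_lt n hn x.1 x.2⟩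
  left_inv x := Fin.ext (swf_swf n hn x.1 x.2)
  right_inv x := Fin.ext (swf_swf n hn x.1 x.2)

lemma fib_width {n h : ℕ} {L : ℕ → Fin n → ℕ} (hL : Side n h L) (j : ℕ) (h2 : 2 ≤ j) (hj : j ≤ h)
    (r : ℕ) (hr : r ∈ Finset.Icc 1 j) : fibc (L j) r ≤ (n + j - 1) / j := by
  by_cases h : j = 2
  · subst h
    exact (hL.fib2 r hr).2
  · rw [hL.fib j (by omega) hj r hr]
    have := Finset.mem_Icc.1 hr
    exact Nat.div_le_div_right (by omega)

/-- One side: everything about rectangles, `P r s` = distance of symbol `s` from the side in row `r`. -/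
lemma one_side (n : ℕ) (hn : 4 ≤ n) (h : ℕ) (hh : h = (n + 1) / 2) (L : ℕ → Fin n → ℕ)
    (hL : Side n h L) (P : ℕ → Fin n → ℕ) (hPn : ∀ r s, P r s < n)
    (hP : ∀ j, 2 ≤ j → j ≤ h → ∀ s, P (L j s) s < fibc (L j) (L j s))
    (hPs : ∀ r s, 1 ≤ r → r ≤ h → h < n + 1 - r → P (n + 1 - r) s = swf n (P r s))
    (i : ℕ) (hi : i ∈ Finset.Icc 1 n) (s : Fin n) :
    (∃ r ∈ Finset.Icc 1 i, P r s < (n + i - 1) / i) ∧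
    (∃ r ∈ Finset.Icc 1 i, P (n + 1 - r) s < (n + i - 1) / i) := by
  have hi' := Finset.mem_Icc.1 hi
  by_cases hi1 : i = 1
  · subst hi1
    refine ⟨⟨1, by simp, ?_⟩, ⟨1, by simp, ?_⟩⟩
    · have := hPn 1 s; simpa using this
    · have := hPn (n + 1 - 1) s; simpa using this
  by_cases hin : i = n
  · subst hin
    have hw : (i + i - 1) / i = 1 := by
      apply Nat.div_eq_of_lt_le <;> omega
    rw [hw]
    have key : ∃ r ∈ Finset.Icc 1 i, P r s < 1 := by
      have hr := hL.rng h (by omega) le_rfl s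
      have hp := hP h (by omega) le_rfl s
      have hp2 : P (L h s) s < 2 := by
        have := fib_width hL h (by omega) le_rfl (L h s) (Finset.mem_Icc.2 hr)
        have : (i + h - 1) / h < 3 := by
          rw [Nat.div_lt_iff_lt_mul (by omega)]; omega
        omega
      by_cases h0 : P (L h s) s = 0
      · exact ⟨L h s, Finset.mem_Icc.2 (by omega), by omega⟩
      · refine ⟨i + 1 - L h s, Finset.mem_Icc.2 (by omega), ?_⟩
        rw [hPs _ s hr.1 hr.2]
        · have : P (L h s) s = 1 := by omega
          rw [this]; simp [swf]
        · by_contra hlt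
          have hodd : L h s = h ∧ i = 2 * h - 1 := by omega
          have := hL.fib h (by omega) le_rfl (L h s) (Finset.mem_Icc.2 hr)
          have h3 : (i + h - L h s) / h < 2 := by
            rw [Nat.div_lt_iff_lt_mul (by omega)]; omega
          omega
    refine ⟨key, ?_⟩
    obtain ⟨r, hr, hk⟩ := key
    have hr' := Finset.mem_Icc.1 hr
    refine ⟨i + 1 - r, Finset.mem_Icc.2 (by omega), ?_⟩
    rwa [show i + 1 - (i + 1 - r) = r by omega]
  -- generic case
  obtain ⟨j, hj2, hjh, hji, hjw⟩ : ∃ j, 2 ≤ j ∧ j ≤ h ∧ j ≤ i ∧ (n + j - 1) / j ≤ (n + i - 1) / i := by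
    by_cases hih : i ≤ h
    · exact ⟨i, by omega, hih, le_rfl, le_rfl⟩
    · refine ⟨h, by omega, le_rfl, by omega, ?_⟩
      have a : (n + h - 1) / h < 3 := by
        rw [Nat.div_lt_iff_lt_mul (by omega)]; omega
      have b : 2 ≤ (n + i - 1) / i := by
        rw [Nat.le_div_iff_mul_le (by omega)]; omega
      omega
  have hr := hL.rng j hj2 hjh s
  have hp := hP j hj2 hjh s
  have hf := fib_width hL j hj2 hjh (L j s) (Finset.mem_Icc.2 hr)
  have hlt : P (L j s) s < (n + i - 1) / i := by omega
  refine ⟨⟨L j s, Finset.mem_Icc.2 (by omega), hlt⟩, ⟨L j s, Finset.mem_Icc.2 (by omega), ?_⟩⟩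
  by_cases hm : h < n + 1 - L j s
  · rw [hPs _ s hr.1 (by omega) hm]
    apply swf_small _ _ _ _ _ hlt
    · rw [Nat.le_div_iff_mul_le (by omega)]; omega
    · have : (n + i - 1) / i < n - 2 + 1 := by
        rw [Nat.div_lt_iff_lt_mul (by omega)]
        obtain ⟨m, rfl⟩ : ∃ m, n = m + 4 := ⟨n - 4, by omega⟩
        obtain ⟨k, rfl⟩ : ∃ k, i = k + 2 := ⟨i - 2, by omega⟩
        have : (m + 4 - 2 + 1) * (k + 2) = m * k + 2 * m + 3 * k + 6 := by
          rw [show m + 4 - 2 + 1 = m + 3 by omega]; ring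
        rw [this]
        have := Nat.zero_le (m * k)
        omega
      omega
  · rwa [show n + 1 - L j s = L j s by omega]

/-- Reduction to permutations of `Fin n`. -/
lemma from_perm (n : ℕ) (B : ℕ → Equiv.Perm (Fin n))
    (h : ∀ i ∈ Finset.Icc 1 n, ∀ s : Fin n,
      ((∃ r ∈ Finset.Icc 1 i, ((B r).symm s).1 < (n + i - 1) / i) ∧
       (∃ r ∈ Finset.Icc 1 i, ((B (n + 1 - r)).symm s).1 < (n + i - 1) / i)) ∧
      ((∃ r ∈ Finset.Icc 1 i, n - 1 - ((B r).symm s).1 < (n + i - 1) / i) ∧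
       (∃ r ∈ Finset.Icc 1 i, n - 1 - ((B (n + 1 - r)).symm s).1 < (n + i - 1) / i))) :
    ∃ A : ℕ → ℕ → ℕ,
      (∀ i ∈ Finset.Icc 1 n,
        Set.BijOn (A i) ↑(Finset.Icc 1 n) ↑(Finset.Icc 1 n)) ∧
      (∀ i ∈ Finset.Icc 1 n, ∀ s ∈ Finset.Icc 1 n,
        (∃ r ∈ Finset.Icc 1 i, ∃ c ∈ Finset.Icc 1 ((n + i - 1) / i),
            A r c = s) ∧
        (∃ r ∈ Finset.Icc 1 i, ∃ c ∈ Finset.Icc 1 ((n + i - 1) / i),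
            A r (n + 1 - c) = s) ∧
        (∃ r ∈ Finset.Icc 1 i, ∃ c ∈ Finset.Icc 1 ((n + i - 1) / i),
            A (n + 1 - r) c = s) ∧
        (∃ r ∈ Finset.Icc 1 i, ∃ c ∈ Finset.Icc 1 ((n + i - 1) / i),
            A (n + 1 - r) (n + 1 - c) = s)) := by
  let A : ℕ → ℕ → ℕ := fun r c => if hc : c - 1 < n then (B r ⟨c - 1, hc⟩).1 + 1 else 0
  have hA : ∀ r (p : Fin n), A r (p.1 + 1) = (B r p).1 + 1 := by
    intro r p
    simp [A]
  have hAs : ∀ r (s : Fin n) c, c = ((B r).symm s).1 + 1 → A r c = s.1 + 1 := by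
    intro r s c hc
    rw [hc, hA]
    simp
  refine ⟨A, ?_, ?_⟩
  · intro r _
    refine ⟨?_, ?_, ?_⟩
    · intro c hc
      simp only [Finset.coe_Icc, Set.mem_Icc] at hc ⊢
      obtain ⟨p, rfl⟩ : ∃ p : Fin n, c = p.1 + 1 := ⟨⟨c - 1, by omega⟩, by simp; omega⟩
      rw [hA]
      have := (B r p).2
      omega
    · intro c hc d hd hcd
      simp only [Finset.coe_Icc, Set.mem_Icc] at hc hd
      obtain ⟨p, rfl⟩ : ∃ p : Fin n, c = p.1 + 1 := ⟨⟨c - 1, by omega⟩, by simp; omega⟩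
      obtain ⟨q, rfl⟩ : ∃ p : Fin n, d = p.1 + 1 := ⟨⟨d - 1, by omega⟩, by simp; omega⟩
      rw [hA, hA] at hcd
      have : B r p = B r q := Fin.ext (by omega)
      rw [(B r).injective this]
    · intro s hs
      simp only [Finset.coe_Icc, Set.mem_Icc] at hs
      obtain ⟨q, rfl⟩ : ∃ p : Fin n, s = p.1 + 1 := ⟨⟨s - 1, by omega⟩, by simp; omega⟩
      refine ⟨((B r).symm q).1 + 1, ?_, hAs _ _ _ rfl⟩
      simp only [Finset.coe_Icc, Set.mem_Icc]
      have := ((B r).symm q).2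
      omega
  · intro i hi s hs
    rw [Finset.mem_Icc] at hs
    obtain ⟨q, rfl⟩ : ∃ p : Fin n, s = p.1 + 1 := ⟨⟨s - 1, by omega⟩, by simp; omega⟩
    obtain ⟨⟨⟨r1, a1, b1⟩, ⟨r2, a2, b2⟩⟩, ⟨⟨r3, a3, b3⟩, ⟨r4, a4, b4⟩⟩⟩ := h i hi q
    refine ⟨⟨r1, a1, ((B r1).symm q).1 + 1, Finset.mem_Icc.2 (by omega), hAs _ _ _ rfl⟩,
      ⟨r3, a3, n - 1 - ((B r3).symm q).1 + 1, Finset.mem_Icc.2 (by omega), hAs _ _ _ ?_⟩,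
      ⟨r2, a2, ((B (n + 1 - r2)).symm q).1 + 1, Finset.mem_Icc.2 (by omega), hAs _ _ _ rfl⟩,
      ⟨r4, a4, n - 1 - ((B (n + 1 - r4)).symm q).1 + 1, Finset.mem_Icc.2 (by omega),
        hAs _ _ _ ?_⟩⟩
    · have := ((B r3).symm q).2
      omega
    · have := ((B (n + 1 - r4)).symm q).2
      omega

lemma main_perm (n : ℕ) (hn : 4 ≤ n) : ∃ B : ℕ → Equiv.Perm (Fin n),
    ∀ i ∈ Finset.Icc 1 n, ∀ s : Fin n,
      ((∃ r ∈ Finset.Icc 1 i, ((B r).symm s).1 < (n + i - 1) / i) ∧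
       (∃ r ∈ Finset.Icc 1 i, ((B (n + 1 - r)).symm s).1 < (n + i - 1) / i)) ∧
      ((∃ r ∈ Finset.Icc 1 i, n - 1 - ((B r).symm s).1 < (n + i - 1) / i) ∧
       (∃ r ∈ Finset.Icc 1 i, n - 1 - ((B (n + 1 - r)).symm s).1 < (n + i - 1) / i)) := by
  obtain ⟨h, hh⟩ : ∃ h, h = (n + 1) / 2 := ⟨_, rfl⟩
  obtain ⟨L, R, hL, hR, σ, hσL, hσR⟩ := top_rows n hn h (by omega) (by omega)
  let B : ℕ → Equiv.Perm (Fin n) := fun r =>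
    if r ≤ h then σ r else (swp n hn).trans (σ (n + 1 - r))
  have hB1 : ∀ r, r ≤ h → B r = σ r := fun r hr => if_pos hr
  have hB2 : ∀ r s, 1 ≤ r → r ≤ h → h < n + 1 - r →
      ((B (n + 1 - r)).symm s).1 = swf n ((B r).symm s).1 := by
    intro r s h1 hr hlt
    have : B (n + 1 - r) = (swp n hn).trans (σ r) := by
      simp only [B, if_neg (not_le.2 hlt)]
      rw [show n + 1 - (n + 1 - r) = r by omega]
    rw [this, hB1 r hr]
    rfl
  refine ⟨B, fun i hi s => ⟨?_, ?_⟩⟩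
  · refine one_side n hn h hh L hL (fun r s => ((B r).symm s).1) (fun r s => Fin.is_lt _) ?_ hB2 i hi s
    intro j h1 h2 s
    have := hL.rng j h1 h2 s
    rw [hB1 _ (by omega)]
    exact hσL j h1 h2 s
  · refine one_side n hn h hh R hR (fun r s => n - 1 - ((B r).symm s).1) (fun r s => by omega)
      ?_ ?_ i hi s
    · intro j h1 h2 s
      have := hR.rng j h1 h2 s
      rw [hB1 _ (by omega)]
      exact hσR j h1 h2 s
    · intro r s h1 hr hlt
      rw [hB2 r s h1 hr hlt, swf_rev n hn _ (Fin.is_lt _)]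

lemma small_perm (n : ℕ) (hn : 0 < n) (hn3 : n ≤ 3) : ∃ B : ℕ → Equiv.Perm (Fin n),
    ∀ i ∈ Finset.Icc 1 n, ∀ s : Fin n,
      ((∃ r ∈ Finset.Icc 1 i, ((B r).symm s).1 < (n + i - 1) / i) ∧
       (∃ r ∈ Finset.Icc 1 i, ((B (n + 1 - r)).symm s).1 < (n + i - 1) / i)) ∧
      ((∃ r ∈ Finset.Icc 1 i, n - 1 - ((B r).symm s).1 < (n + i - 1) / i) ∧
       (∃ r ∈ Finset.Icc 1 i, n - 1 - ((B (n + 1 - r)).symm s).1 < (n + i - 1) / i)) := by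
  obtain rfl | rfl | rfl : n = 1 ∨ n = 2 ∨ n = 3 := by omega
  · exact ⟨fun _ => Equiv.refl _, by decide⟩
  · exact ⟨fun r => if r = 1 then Equiv.refl _ else Equiv.swap 0 1, by decide⟩
  · exact ⟨fun r => finRotate 3 ^ r, by decide⟩

/-- For every positive integer `n`, there exists a type-1,2,3,4 retransmission
permutation array of order `n`: an `n × n` array (rows/columns indexed `1..n`)
each of whose rows is a permutation of `{1,…,n}`, such that for each `1 ≤ i ≤ n`
the `i × ⌈n/i⌉` rectangles anchored in the four corners each contain all `n`
symbols.  Here `⌈n/i⌉ = (n + i - 1) / i`. -/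
theorem exists_type1234_RPA (n : ℕ) (hn : 0 < n) :
    ∃ A : ℕ → ℕ → ℕ,
      (∀ i ∈ Finset.Icc 1 n,
        Set.BijOn (A i) ↑(Finset.Icc 1 n) ↑(Finset.Icc 1 n)) ∧
      (∀ i ∈ Finset.Icc 1 n, ∀ s ∈ Finset.Icc 1 n,
        (∃ r ∈ Finset.Icc 1 i, ∃ c ∈ Finset.Icc 1 ((n + i - 1) / i),
            A r c = s) ∧
        (∃ r ∈ Finset.Icc 1 i, ∃ c ∈ Finset.Icc 1 ((n + i - 1) / i),
            A r (n + 1 - c) = s) ∧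
        (∃ r ∈ Finset.Icc 1 i, ∃ c ∈ Finset.Icc 1 ((n + i - 1) / i),
            A (n + 1 - r) c = s) ∧
        (∃ r ∈ Finset.Icc 1 i, ∃ c ∈ Finset.Icc 1 ((n + i - 1) / i),
            A (n + 1 - r) (n + 1 - c) = s)) := by
  rcases Nat.lt_or_ge n 4 with h | h
  · obtain ⟨B, hB⟩ := small_perm n hn (by omega)
    exact from_perm n B hB
  · obtain ⟨B, hB⟩ := main_perm n h
    exact from_perm n B hB
end

section
/- For every positive integer n, there exists an n×n latin square A on symbols {1,...,n} such that for every i with 1 ≤ i ≤ n, the i × ⌈n/i⌉ rectangle in the upper left corner of A contains all n symbols, and the i × ⌈n/i⌉ rectangle in the upper right corner of A contains all n symbols. -/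
namespace LRPA

open Finset

/-- A Hall-type lemma with an Ore-like degree condition. -/
theorem hallPair {α β : Type*} [DecidableEq α] [DecidableEq β] [Nonempty β] (S : Finset α) (T : Finset β)
    (hcard : S.card ≤ T.card) (R : α → β → Prop) [∀ a b, Decidable (R a b)]
    (h : ∀ a ∈ S, ∀ b ∈ T, ¬ R a b →
      (T.filter (fun b' => ¬ R a b')).card + (S.filter (fun a' => ¬ R a' b)).card ≤ T.card) :
    ∃ f : α → β, (∀ a ∈ S, f a ∈ T ∧ R a (f a)) ∧ Set.InjOn f S := by
  classical
  by_cases hT : T.Nonempty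
  swap
  · have hT' : T = ∅ := Finset.not_nonempty_iff_eq_empty.mp hT
    have hS : S = ∅ := by
      rw [hT'] at hcard
      simpa using hcard
    exact ⟨fun _ => Classical.arbitrary β, by simp [hS], by simp [hS]⟩
  obtain ⟨b0, hb0⟩ := hT
  have key : ∀ s : Finset S, s.card ≤ (s.biUnion (fun a => T.filter (R a))).card := by
    intro s
    by_contra hlt
    push Not at hlt
    set N := s.biUnion (fun a : S => T.filter (R a)) with hN
    have hNT : N ⊆ T := by
      intro b hb
      simp [hN] at hb
      tauto
    have hsS : s.card ≤ S.card := by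
      have := Finset.card_le_univ s
      simpa using this
    have hex : ∃ b ∈ T, b ∉ N := by
      by_contra hcon
      push Not at hcon
      have := Finset.card_le_card (show T ⊆ N from hcon)
      omega
    obtain ⟨b, hbT, hbN⟩ := hex
    have hs : s.Nonempty := by
      rw [Finset.nonempty_iff_ne_empty]
      rintro rfl
      simp at hlt
    obtain ⟨a, ha⟩ := hs
    have hnon : ∀ a' ∈ s, ¬ R a' b := by
      intro a' ha' hR
      apply hbN
      simp only [hN, Finset.mem_biUnion, Finset.mem_filter]
      exact ⟨a', ha', hbT, hR⟩
    have h1 := h a a.2 b hbT (hnon a ha)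
    have h2 : s.card ≤ (S.filter (fun a' => ¬ R a' b)).card := by
      rw [← Finset.card_map (Function.Embedding.subtype _)]
      apply Finset.card_le_card
      intro y hy
      simp only [Finset.mem_map, Function.Embedding.coe_subtype] at hy
      obtain ⟨y', hy', rfl⟩ := hy
      simp only [Finset.mem_filter]
      exact ⟨y'.2, hnon y' hy'⟩
    have h3 : (T.filter (R a)).card ≤ N.card := by
      apply Finset.card_le_card
      intro y hy
      simp only [hN, Finset.mem_biUnion]
      exact ⟨a, ha, hy⟩
    have h4 := Finset.card_filter_add_card_filter_not (s := T) (R a)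
    omega
  obtain ⟨f, hf1, hf2⟩ := (Finset.all_card_le_biUnion_card_iff_exists_injective _).mp key
  refine ⟨fun a => if h : a ∈ S then f ⟨a, h⟩ else b0, ?_, ?_⟩
  · intro a ha
    have := hf2 ⟨a, ha⟩
    simp only [Finset.mem_filter] at this
    simp only [ha, dif_pos]
    exact this
  · intro a ha a' ha' hEq
    have ha := Finset.mem_coe.mp ha
    have ha' := Finset.mem_coe.mp ha'
    simp only [ha, ha', dif_pos] at hEq
    have := hf1 hEq
    simpa using this

variable {n : ℕ}

/-- Cells `(r,c)` leaving the active set exactly after time `t`. -/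
def Lab (n r c t : ℕ) : Prop := r + t * c < n ∧ n ≤ r + (t + 1) * c

instance (n r c t : ℕ) : Decidable (Lab n r c t) := by unfold Lab; infer_instance

theorem Lab.unique {n r c t t' : ℕ} (h : Lab n r c t) (h' : Lab n r c t') : t = t' := by
  obtain ⟨h1, h2⟩ := h
  obtain ⟨h3, h4⟩ := h'
  rcases lt_trichotomy t t' with hlt | heq | hlt
  · have := Nat.mul_le_mul_right c (Nat.succ_le_of_lt hlt)
    simp only [Nat.succ_eq_add_one] at this
    omega
  · exact heq
  · have := Nat.mul_le_mul_right c (Nat.succ_le_of_lt hlt)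
    simp only [Nat.succ_eq_add_one] at this
    omega

theorem card_Lab (i t : ℕ) (hit : i < t) :
    (((range (i + 1)) ×ˢ (univ : Finset (Fin n))).filter
      (fun q => Lab n q.1 q.2 t)).card ≤ n / (i + 1) := by
  have : (range (n / (i + 1))).card = n / (i + 1) := by simp
  rw [← this]
  apply Finset.card_le_card_of_injOn (fun q => n - 1 - q.1 - t * q.2)
  · rintro ⟨r, c⟩ h
    simp only [Finset.coe_filter, Finset.mem_product, Finset.mem_range, Finset.mem_univ,
      and_true, Set.mem_ofPred_eq] at h
    obtain ⟨hr, h1, h2⟩ := h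
    simp only [Finset.coe_range, Set.mem_Iio]
    rw [Nat.lt_iff_add_one_le, Nat.le_div_iff_mul_le (by omega)]
    have h3 : (t + 1) * (c : ℕ) = t * c + c := by ring
    have h4 : n - 1 - r - t * c + 1 ≤ c := by omega
    have h5 := Nat.mul_le_mul_right t h4
    have h6 : (n - 1 - r - t * c + 1) * (i + 1) ≤ (n - 1 - r - t * c + 1) * t :=
      Nat.mul_le_mul_left _ hit
    have h7 : (c : ℕ) * t = t * c := by ring
    omega
  · rintro ⟨r, c⟩ h ⟨r', c'⟩ h' hEq
    simp only [Finset.coe_filter, Finset.mem_product, Finset.mem_range, Finset.mem_univ,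
      and_true, Set.mem_ofPred_eq] at h h'
    obtain ⟨hr, h1, h2⟩ := h
    obtain ⟨hr', h1', h2'⟩ := h'
    simp only at hEq
    have hv : r + t * c = r' + t * c' := by omega
    have e1 : (r + t * c) % t = r := by
      rw [Nat.add_mul_mod_self_left, Nat.mod_eq_of_lt (by omega)]
    have e2 : (r' + t * c') % t = r' := by
      rw [Nat.add_mul_mod_self_left, Nat.mod_eq_of_lt (by omega)]
    have e3 : r = r' := by rw [← e1, ← e2, hv]
    subst e3
    have : t * (c : ℕ) = t * c' := by omega
    have := Nat.eq_of_mul_eq_mul_left (by omega) this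
    simp [Fin.ext_iff, this]

/-- Symbols not seen in the active cells of rows `< i` at time `i+1`. -/
def Miss (P : ℕ → Fin n → Fin n) (i : ℕ) : Finset (Fin n) :=
  univ.filter (fun x => ∀ r < i, ∀ c : Fin n, r + (i + 1) * c < n → P r c ≠ x)

/-- New columns in row `i`. -/
def NewC (n i : ℕ) : Finset (Fin n) := univ.filter (fun c : Fin n => i + (i + 1) * c < n)

def InjP (P : ℕ → Fin n → Fin n) (i : ℕ) : Prop :=
  ∀ r r' : ℕ, ∀ c c' : Fin n, r < i → r' < i → r + (i + 1) * c < n → r' + (i + 1) * c' < n →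
    P r c = P r' c' → r = r' ∧ c = c'

theorem card_NewC (n i : ℕ) : (NewC n i).card = n / (i + 1) := by
  have : (range (n / (i + 1))).card = n / (i + 1) := by simp
  rw [← this, ← Finset.card_map (Fin.valEmbedding)]
  congr 1
  ext c
  simp only [NewC, Finset.mem_map, Finset.mem_filter, Finset.mem_univ, true_and,
    Fin.valEmbedding_apply, Finset.mem_range]
  rw [Nat.lt_iff_add_one_le, Nat.le_div_iff_mul_le (by omega)]
  constructor
  · rintro ⟨a, ha, rfl⟩
    have : ((a : ℕ) + 1) * (i + 1) = i + (i + 1) * a + 1 := by ring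
    omega
  · intro h
    have h1 : (c + 1) * (i + 1) = i + (i + 1) * c + 1 := by ring
    have h2 : c * 1 ≤ c * (i + 1) := Nat.mul_le_mul_left _ (by omega)
    have h3 : c * (i + 1) = (i + 1) * c := by ring
    exact ⟨⟨c, by omega⟩, by simp only; omega, rfl⟩

theorem card_Miss (P : ℕ → Fin n → Fin n) (i : ℕ) (hP : InjP P i) :
    (Miss P i).card = n / (i + 1) := by
  classical
  -- cells
  set B := ((range i) ×ˢ (univ : Finset (Fin n))).filter
      (fun q => q.1 + (i + 1) * (q.2 : ℕ) < n) with hB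
  set A := ((range (i + 1)) ×ˢ (univ : Finset (Fin n))).filter
      (fun q => q.1 + (i + 1) * (q.2 : ℕ) < n) with hA
  have hAcard : A.card = n := by
    refine Eq.trans ?_ (Finset.card_range n)
    apply Finset.card_bij (fun q _ => q.1 + (i + 1) * (q.2 : ℕ))
    · rintro ⟨r, c⟩ h
      simp [hA] at h ⊢
      omega
    · rintro ⟨r, c⟩ h ⟨r', c'⟩ h' hEq
      simp only [hA, Finset.mem_filter, Finset.mem_product, Finset.mem_range, Finset.mem_univ,
        and_true] at h h' hEq
      have e1 : (r + (i + 1) * c) % (i + 1) = r := by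
        rw [Nat.add_mul_mod_self_left, Nat.mod_eq_of_lt (by omega)]
      have e2 : (r' + (i + 1) * c') % (i + 1) = r' := by
        rw [Nat.add_mul_mod_self_left, Nat.mod_eq_of_lt (by omega)]
      have e3 : r = r' := by rw [← e1, ← e2, hEq]
      subst e3
      have : (i + 1) * (c : ℕ) = (i + 1) * c' := by omega
      have := Nat.eq_of_mul_eq_mul_left (by omega) this
      simp [Fin.ext_iff, this]
    · intro v hv
      simp only [Finset.mem_range] at hv
      refine ⟨(v % (i + 1), ⟨v / (i + 1), lt_of_le_of_lt (Nat.div_le_self _ _) hv⟩), ?_, ?_⟩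
      · simp only [hA, Finset.mem_filter, Finset.mem_product, Finset.mem_range, Finset.mem_univ,
          and_true]
        exact ⟨Nat.mod_lt _ (by omega), by rw [Nat.mod_add_div]; exact hv⟩
      · simp only
        exact Nat.mod_add_div _ _
  have hsplit : A.card = B.card + (NewC n i).card := by
    rw [← Finset.card_image_of_injective (s := NewC n i) (f := fun c => (i, c))
      (by intro a b h; simpa using h)]
    rw [← Finset.card_union_of_disjoint]
    · congr 1
      ext ⟨r, c⟩
      simp only [hA, hB, NewC, Finset.mem_filter, Finset.mem_product, Finset.mem_range,
        Finset.mem_univ, and_true, Finset.mem_union, Finset.mem_image,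
        true_and, Prod.mk.injEq]
      constructor
      · rintro ⟨h1, h2⟩
        rcases Nat.lt_succ_iff_lt_or_eq.mp h1 with h | h
        · exact Or.inl ⟨h, h2⟩
        · exact Or.inr ⟨c, by subst h; exact h2, h.symm, rfl⟩
      · rintro (⟨h1, h2⟩ | ⟨c', h1, rfl, rfl⟩)
        · exact ⟨by omega, h2⟩
        · exact ⟨by omega, h1⟩
    · rw [Finset.disjoint_left]
      rintro ⟨r, c⟩ h1 h2
      simp [hB] at h1 h2
      omega
  have himg : (B.image (fun q => P q.1 q.2)).card = B.card := by
    apply Finset.card_image_of_injOn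
    rintro ⟨r, c⟩ h ⟨r', c'⟩ h' hEq
    simp only [hB, Finset.coe_filter, Finset.mem_product, Finset.mem_range, Finset.mem_univ,
      and_true, Set.mem_ofPred_eq] at h h' hEq
    obtain ⟨h1, h2⟩ := hP r r' c c' h.1 h'.1 h.2 h'.2 hEq
    rw [h1, h2]
  have hM : Miss P i = (B.image (fun q => P q.1 q.2))ᶜ := by
    ext x
    simp only [Miss, hB, Finset.mem_filter, Finset.mem_univ, true_and, Finset.mem_compl,
      Finset.mem_image, Finset.mem_product, Finset.mem_range, and_true, Prod.exists, not_exists,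
      not_and]
    constructor
    · intro h r c h1
      exact h r h1.1 c h1.2
    · intro h r hr c hc
      exact h r c ⟨hr, hc⟩
  rw [hM, Finset.card_compl, himg, Fintype.card_fin]
  have := card_NewC n i
  omega

/-- choice of the prescribed part of row `i` on one side -/
theorem step_side [Nonempty (Fin n)] (P Q : ℕ → Fin n → Fin n) (i : ℕ) (hP : InjP P i) (hQ : InjP Q i) :
    ∃ f : Fin n → Fin n, (∀ c ∈ NewC n i, f c ∈ Miss P i) ∧ Set.InjOn f (NewC n i) ∧
      (∀ x ∈ Miss P i, ∃ c ∈ NewC n i, f c = x) ∧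
      (∀ c ∈ NewC n i, ∀ t, i < t → Lab n i c t → ∀ r < i, ∀ c' : Fin n, Lab n r c' t →
        Q r c' ≠ f c) := by
  classical
  have hcard : (NewC n i).card = (Miss P i).card := by rw [card_NewC, card_Miss P i hP]
  obtain ⟨f, hf1, hf2⟩ := hallPair (NewC n i) (Miss P i) hcard.le
    (fun c x => ∀ t, i < t → Lab n i c t → ∀ r < i, ∀ c' : Fin n, Lab n r c' t → Q r c' ≠ x) (by
    intro c hc x hx hR
    push Not at hR
    obtain ⟨t, hit, hl, r, hr, c', hl', hxe⟩ := hR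
    rw [card_Miss P i hP]
    refine le_trans ?_ (card_Lab (n := n) i t hit)
    set E := ((range (i + 1)) ×ˢ (univ : Finset (Fin n))).filter
      (fun q => Lab n q.1 q.2 t) with hE
    have hsplit := Finset.card_filter_add_card_filter_not (s := E) (fun q => q.1 < i)
    rw [← hsplit]
    apply add_le_add
    · refine le_trans (Finset.card_le_card (t := (E.filter (fun q => q.1 < i)).image
        (fun q => Q q.1 q.2)) ?_) Finset.card_image_le
      intro y hy
      simp only [Finset.mem_filter] at hy
      obtain ⟨hy1, hy2⟩ := hy
      push Not at hy2
      obtain ⟨t2, hit2, hl2, r2, hr2, c2, hl2', hxe2⟩ := hy2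
      have := hl.unique hl2
      subst this
      simp only [Finset.mem_image, Finset.mem_filter, Prod.exists, hE, Finset.mem_product,
        Finset.mem_range, Finset.mem_univ, and_true]
      exact ⟨r2, c2, ⟨⟨by omega, hl2'⟩, hr2⟩, hxe2⟩
    · refine le_trans (Finset.card_le_card (t := (E.filter (fun q => ¬ q.1 < i)).image
        (fun q => q.2)) ?_) Finset.card_image_le
      intro d hd
      simp only [Finset.mem_filter] at hd
      obtain ⟨hd1, hd2⟩ := hd
      push Not at hd2
      obtain ⟨t2, hit2, hl2, r2, hr2, c2, hl2', hxe2⟩ := hd2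
      have hin : ∀ (r t : ℕ) (c : Fin n), i < t → Lab n r c t → r + (i + 1) * c < n := by
        intro r t c ht h
        have := h.1
        have := Nat.mul_le_mul_right (c : ℕ) (Nat.succ_le_of_lt ht)
        simp only [Nat.succ_eq_add_one] at this
        omega
      obtain ⟨e1, e2⟩ := hQ r r2 c' c2 hr hr2 (hin _ _ _ hit hl') (hin _ _ _ hit2 hl2')
        (hxe.trans hxe2.symm)
      subst e1 e2
      have := hl'.unique hl2'
      subst this
      simp only [Finset.mem_image, Finset.mem_filter, Prod.exists, hE, Finset.mem_product,
        Finset.mem_range, Finset.mem_univ, and_true]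
      exact ⟨i, d, ⟨⟨by omega, hl2⟩, by omega⟩, rfl⟩)
  refine ⟨f, fun c hc => (hf1 c hc).1, hf2, ?_, fun c hc => (hf1 c hc).2⟩
  intro x hx
  have := Finset.surj_on_of_inj_on_of_card_le (s := NewC n i) (t := Miss P i)
    (fun c _ => f c) (fun c hc => (hf1 c hc).1) (fun a b ha hb h => hf2 ha hb h) hcard.ge x hx
  obtain ⟨c, hc, he⟩ := this
  exact ⟨c, hc, he.symm⟩



def Lat (A : ℕ → Equiv.Perm (Fin n)) (i : ℕ) : Prop :=
  ∀ r r' : ℕ, r < r' → r' < i → ∀ c, A r c ≠ A r' c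

def Cov (P : ℕ → Fin n → Fin n) (j : ℕ) : Prop :=
  ∀ x, ∃ r < j, ∃ c : Fin n, (c : ℕ) * j < n ∧ P r c = x

/-- left view -/
def Lv (A : ℕ → Equiv.Perm (Fin n)) : ℕ → Fin n → Fin n := fun r c => A r c

/-- right (mirrored) view -/
def Rv (A : ℕ → Equiv.Perm (Fin n)) : ℕ → Fin n → Fin n := fun r c => A r c.rev

def D0 (P Q : ℕ → Fin n → Fin n) (i : ℕ) : Prop :=
  ∀ x, (∃ r < i, ∃ c : Fin n, r + (i + 1) * c < n ∧ P r c = x) ∨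
    (∃ r < i, ∃ c : Fin n, r + (i + 1) * c < n ∧ Q r c = x)

def D1 (P Q : ℕ → Fin n → Fin n) (i : ℕ) : Prop :=
  ∀ t, i < t → ∀ r < i, ∀ r' < i, ∀ c c' : Fin n, Lab n r c t → Lab n r' c' t →
    P r c ≠ Q r' c'

structure Inv (A : ℕ → Equiv.Perm (Fin n)) (i : ℕ) : Prop where
  lat : Lat A i
  injL : InjP (Lv A) i
  injR : InjP (Rv A) i
  d0 : D0 (Lv A) (Rv A) i
  d1 : D1 (Lv A) (Rv A) i
  covL : ∀ j, 1 ≤ j → j ≤ i → Cov (Lv A) j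
  covR : ∀ j, 1 ≤ j → j ≤ i → Cov (Rv A) j

theorem side_inj (P P' : ℕ → Fin n → Fin n) (i : ℕ) (f : Fin n → Fin n) (hP : InjP P i)
    (hf1 : ∀ c ∈ NewC n i, f c ∈ Miss P i) (hf2 : Set.InjOn f (NewC n i))
    (h1 : ∀ r < i, P' r = P r) (h2 : ∀ c ∈ NewC n i, P' i c = f c) :
    ∀ r r' : ℕ, ∀ c c' : Fin n, r < i + 1 → r' < i + 1 → r + (i + 1) * c < n →
      r' + (i + 1) * c' < n → P' r c = P' r' c' → r = r' ∧ c = c' := by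
  intro r r' c c' hr hr' hc hc' hEq
  have hmem : ∀ c : Fin n, i + (i + 1) * c < n → c ∈ NewC n i := by
    intro c hc
    simp [NewC, hc]
  have hne : ∀ r < i, ∀ c d : Fin n, r + (i + 1) * c < n → d ∈ NewC n i → P r c ≠ f d := by
    intro r hr c d hc hd
    have := hf1 d hd
    simp only [Miss, Finset.mem_filter, Finset.mem_univ, true_and] at this
    exact this r hr c hc
  rcases Nat.lt_succ_iff_lt_or_eq.mp hr with h | h <;>
  rcases Nat.lt_succ_iff_lt_or_eq.mp hr' with h' | h'
  · rw [h1 r h, h1 r' h'] at hEq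
    exact hP r r' c c' h h' hc hc' hEq
  · subst h'
    rw [h1 r h, h2 c' (hmem _ hc')] at hEq
    exact (hne r h c c' hc (hmem _ hc') hEq).elim
  · subst h
    rw [h1 r' h', h2 c (hmem _ hc)] at hEq
    exact (hne r' h' c' c hc' (hmem _ hc) hEq.symm).elim
  · subst h
    subst h'
    rw [h2 c (hmem _ hc), h2 c' (hmem _ hc')] at hEq
    exact ⟨rfl, hf2 (hmem _ hc) (hmem _ hc') hEq⟩

theorem side_surj (P P' : ℕ → Fin n → Fin n) (i : ℕ) (f : Fin n → Fin n)
    (hf3 : ∀ x ∈ Miss P i, ∃ c ∈ NewC n i, f c = x)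
    (h1 : ∀ r < i, P' r = P r) (h2 : ∀ c ∈ NewC n i, P' i c = f c) (x : Fin n) :
    ∃ r < i + 1, ∃ c : Fin n, r + (i + 1) * c < n ∧ P' r c = x := by
  by_cases hx : x ∈ Miss P i
  · obtain ⟨c, hc, hfc⟩ := hf3 x hx
    refine ⟨i, by omega, c, ?_, by rw [h2 c hc, hfc]⟩
    simpa [NewC] using hc
  · simp only [Miss, Finset.mem_filter, Finset.mem_univ, true_and] at hx
    push Not at hx
    obtain ⟨r, hr, c, hc, he⟩ := hx
    exact ⟨r, by omega, c, hc, by rw [h1 r hr, he]⟩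

theorem arith1 (n i : ℕ) (hn : 10 ≤ n) (hi : 2 ≤ i) (h : 2 * (i + 1) + 2 ≤ n) :
    2 * i + 2 * (n / (i + 1)) ≤ n := by
  rcases Nat.lt_or_ge i 3 with h3 | h3
  · have : i = 2 := by omega
    subst this
    omega
  · have hp := Nat.div_mul_le_self n (i + 1)
    set p := n / (i + 1) with hpdef
    rcases Nat.lt_or_ge p 3 with h4 | h4
    · omega
    · obtain ⟨a, rfl⟩ := Nat.exists_eq_add_of_le h3
      obtain ⟨b, hb⟩ := Nat.exists_eq_add_of_le h4
      rw [hb] at hp ⊢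
      nlinarith

theorem fill_row [Nonempty (Fin n)] (A : ℕ → Equiv.Perm (Fin n)) (i : ℕ) (hn : 10 ≤ n)
    (hi : 2 ≤ i) (hin : 2 * (i + 1) ≤ n)
    (hInv : Inv A i) (f g : Fin n → Fin n)
    (hf1 : ∀ c ∈ NewC n i, f c ∈ Miss (Lv A) i) (hf2 : Set.InjOn f (NewC n i))
    (hg1 : ∀ c ∈ NewC n i, g c ∈ Miss (Rv A) i) (hg2 : Set.InjOn g (NewC n i)) :
    ∃ σ : Equiv.Perm (Fin n), (∀ c ∈ NewC n i, σ c = f c) ∧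
      (∀ c ∈ NewC n i, σ c.rev = g c) ∧ ∀ r < i, ∀ c, A r c ≠ σ c := by
  classical
  set S := NewC n i with hS
  have hSm : ∀ c : Fin n, c ∈ S ↔ i + (i + 1) * (c : ℕ) < n := by
    intro c
    simp [hS, NewC]
  have hSlt : ∀ c ∈ S, 3 * ((c : ℕ) + 1) ≤ n := by
    intro c hc
    have h1 := (hSm c).mp hc
    have h2 := Nat.mul_le_mul_right (c : ℕ) (show 3 ≤ i + 1 by omega)
    omega
  have hrev : ∀ c ∈ S, c.rev ∉ S := by
    intro c hc hc'
    have h1 := hSlt c hc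
    have h2 := hSlt _ hc'
    rw [Fin.val_rev] at h2
    omega
  have hdisj : Disjoint (Miss (Lv A) i) (Miss (Rv A) i) := by
    rw [Finset.disjoint_left]
    intro x h1 h2
    simp only [Miss, Finset.mem_filter, Finset.mem_univ, true_and] at h1 h2
    rcases hInv.d0 x with ⟨r, hr, c, hc, he⟩ | ⟨r, hr, c, hc, he⟩
    · exact h1 r hr c hc he
    · exact h2 r hr c hc he
  set F := (S ∪ S.image Fin.rev)ᶜ with hF
  set T := (Miss (Lv A) i ∪ Miss (Rv A) i)ᶜ with hT
  have hFm : ∀ c, c ∈ F ↔ c ∉ S ∧ c.rev ∉ S := by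
    intro c
    simp only [hF, Finset.mem_compl, Finset.mem_union, Finset.mem_image, not_or, not_exists,
      not_and]
    constructor
    · rintro ⟨h1, h2⟩
      exact ⟨h1, fun h => h2 _ h (Fin.rev_rev c)⟩
    · rintro ⟨h1, h2⟩
      refine ⟨h1, ?_⟩
      rintro d hd rfl
      rw [Fin.rev_rev] at h2
      exact h2 hd
  have hFc : F.card = n - 2 * (n / (i + 1)) := by
    rw [hF, Finset.card_compl, Finset.card_union_of_disjoint,
      Finset.card_image_of_injective _ Fin.rev_injective, card_NewC, Fintype.card_fin]
    · omega
    · rw [Finset.disjoint_right]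
      intro c hc hc'
      simp only [Finset.mem_image] at hc
      obtain ⟨d, hd, rfl⟩ := hc
      exact hrev d hd hc'
  have hTc : T.card = n - 2 * (n / (i + 1)) := by
    rw [hT, Finset.card_compl, Finset.card_union_of_disjoint hdisj, card_Miss _ _ hInv.injL,
      card_Miss _ _ hInv.injR, Fintype.card_fin]
    omega
  have hndc : ∀ c, (T.filter (fun x => ¬ ∀ r < i, A r c ≠ x)).card ≤ i := by
    intro c
    refine le_trans (Finset.card_le_card (t := (range i).image (fun r => A r c)) ?_)
      (le_trans Finset.card_image_le (by simp))
    intro x hx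
    simp only [Finset.mem_filter] at hx
    obtain ⟨_, hx⟩ := hx
    push Not at hx
    obtain ⟨r, hr, he⟩ := hx
    simp only [Finset.mem_image, Finset.mem_range]
    exact ⟨r, hr, he⟩
  have hndx : ∀ x, ∀ Z : Finset ℕ, Z ⊆ range i → (∀ r ∈ Z, (A r).symm x ∉ F) →
      (F.filter (fun c => ¬ ∀ r < i, A r c ≠ x)).card + Z.card ≤ i := by
    intro x Z hZ hZF
    have : (F.filter (fun c => ¬ ∀ r < i, A r c ≠ x)).card ≤ (range i \ Z).card := by
      refine le_trans (Finset.card_le_card (t := (range i \ Z).image (fun r => (A r).symm x)) ?_)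
        Finset.card_image_le
      intro c hc
      simp only [Finset.mem_filter] at hc
      obtain ⟨hcF, hx⟩ := hc
      push Not at hx
      obtain ⟨r, hr, he⟩ := hx
      have hs : (A r).symm x = c := by rw [← he, Equiv.symm_apply_apply]
      simp only [Finset.mem_image, Finset.mem_sdiff, Finset.mem_range]
      refine ⟨r, ⟨hr, ?_⟩, hs⟩
      intro hrZ
      apply hZF r hrZ
      rw [hs]
      exact hcF
    rw [Finset.card_sdiff_of_subset hZ, Finset.card_range] at this
    have hle := Finset.card_le_card hZ
    rw [Finset.card_range] at hle
    omega
  obtain ⟨h, hh1, hh2⟩ := hallPair F T (by rw [hFc, hTc]) (fun c x => ∀ r < i, A r c ≠ x) (by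
    intro c hc x hx _
    rw [hTc]
    have hb1 := hndc c
    rcases Nat.lt_or_ge n (2 * (i + 1) + 2) with hbig | hbig
    swap
    · have := arith1 n i hn hi hbig
      have hb2 := hndx x ∅ (by simp) (by simp)
      simp only [Finset.card_empty] at hb2
      omega
    -- the two last rows
    have hp : n / (i + 1) = 2 := by
      rw [Nat.div_eq_iff (by omega)]
      omega
    rw [hp]
    have hx' := hx
    simp only [hT, Finset.mem_compl, Finset.mem_union, not_or, Miss, Finset.mem_filter,
      Finset.mem_univ, true_and] at hx'
    obtain ⟨hxL, hxR⟩ := hx'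
    push Not at hxL hxR
    obtain ⟨r1, hr1, c1, hc1, he1⟩ := hxL
    obtain ⟨r2, hr2, c2, hc2, he2⟩ := hxR
    have hs1 : (A r1).symm x = c1 := by
      rw [Equiv.symm_apply_eq]
      exact he1.symm
    have hs2 : (A r2).symm x = c2.rev := by
      rw [Equiv.symm_apply_eq]
      exact he2.symm
    have hcase : ∀ (r : ℕ) (c : Fin n), r + (i + 1) * c < n →
        c ∈ S ∨ (n = 2 * i + 3 ∧ (c : ℕ) = 2 ∧ r = 0) := by
      intro r c hc
      rcases Nat.lt_or_ge (c : ℕ) 2 with h2 | h2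
      · left
        rw [hSm]
        have := Nat.mul_le_mul_left (i + 1) (show (c : ℕ) ≤ 1 by omega)
        omega
      · right
        rcases Nat.lt_or_ge 2 (c : ℕ) with h3 | h3
        · have := Nat.mul_le_mul_left (i + 1) (show 3 ≤ (c : ℕ) by omega)
          omega
        · have h4 : (c : ℕ) = 2 := by omega
          rw [h4] at hc
          omega
    rcases hcase r1 c1 hc1 with k1 | ⟨k1, k2, k3⟩ <;>
    rcases hcase r2 c2 hc2 with l1 | ⟨l1, l2, l3⟩
    · have hne : r1 ≠ r2 := by
        rintro rfl
        rw [hs1] at hs2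
        apply hrev c2 l1
        rw [← hs2]
        exact k1
      have hb2 := hndx x {r1, r2} (by
        intro r hr
        simp only [Finset.mem_insert, Finset.mem_singleton] at hr
        simp only [Finset.mem_range]
        omega) (by
        intro r hr
        simp only [Finset.mem_insert, Finset.mem_singleton] at hr
        rw [hFm]
        rcases hr with rfl | rfl
        · rw [hs1]
          tauto
        · rw [hs2, Fin.rev_rev]
          tauto)
      rw [Finset.card_pair hne] at hb2
      omega
    · have hb2 := hndx x {r1} (by simpa using hr1) (by
        intro r hr
        simp only [Finset.mem_singleton] at hr
        rw [hFm, hr, hs1]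
        tauto)
      rw [Finset.card_singleton] at hb2
      omega
    · have hb2 := hndx x {r2} (by simpa using hr2) (by
        intro r hr
        simp only [Finset.mem_singleton] at hr
        rw [hFm, hr, hs2, Fin.rev_rev]
        tauto)
      rw [Finset.card_singleton] at hb2
      omega
    · exfalso
      subst k3
      subst l3
      rw [hs1] at hs2
      have := congrArg Fin.val hs2
      rw [Fin.val_rev] at this
      omega)
  have hTf : ∀ c ∈ S, f c ∉ T := by
    intro c hc hcon
    simp only [hT, Finset.mem_compl, Finset.mem_union, not_or] at hcon
    exact hcon.1 (hf1 c hc)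
  have hTg : ∀ c ∈ S, g c ∉ T := by
    intro c hc hcon
    simp only [hT, Finset.mem_compl, Finset.mem_union, not_or] at hcon
    exact hcon.2 (hg1 c hc)
  have hfg : ∀ c ∈ S, ∀ d ∈ S, f c ≠ g d := by
    intro c hc d hd he
    exact (Finset.disjoint_left.mp hdisj (hf1 c hc)) (he ▸ hg1 d hd)
  set s : Fin n → Fin n := fun c => if c ∈ S then f c else if c.rev ∈ S then g c.rev else h c
    with hs
  have s1 : ∀ c ∈ S, s c = f c := by
    intro c hc
    simp [hs, hc]
  have s2 : ∀ c, c.rev ∈ S → s c = g c.rev := by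
    intro c hc
    have : c ∉ S := by
      have := hrev _ hc
      rwa [Fin.rev_rev] at this
    simp [hs, hc, this]
  have s3 : ∀ c ∈ F, s c = h c := by
    intro c hc
    rw [hFm] at hc
    simp [hs, hc.1, hc.2]
  have htri : ∀ c, c ∈ S ∨ c.rev ∈ S ∨ c ∈ F := by
    intro c
    rw [hFm]
    tauto
  have hsinj : Function.Injective s := by
    intro a b hab
    rcases htri a with ha | ha | ha <;> rcases htri b with hb | hb | hb
    · rw [s1 a ha, s1 b hb] at hab
      exact hf2 ha hb hab
    · rw [s1 a ha, s2 b hb] at hab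
      exact (hfg _ ha _ hb hab).elim
    · rw [s1 a ha, s3 b hb] at hab
      exact (hTf a ha (hab ▸ (hh1 b hb).1)).elim
    · rw [s2 a ha, s1 b hb] at hab
      exact (hfg _ hb _ ha hab.symm).elim
    · rw [s2 a ha, s2 b hb] at hab
      exact Fin.rev_injective (hg2 ha hb hab)
    · rw [s2 a ha, s3 b hb] at hab
      exact (hTg _ ha (hab ▸ (hh1 b hb).1)).elim
    · rw [s3 a ha, s1 b hb] at hab
      exact (hTf b hb (hab ▸ (hh1 a ha).1)).elim
    · rw [s3 a ha, s2 b hb] at hab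
      exact (hTg _ hb (hab ▸ (hh1 a ha).1)).elim
    · rw [s3 a ha, s3 b hb] at hab
      exact hh2 ha hb hab
  have hmono : ∀ r < i, ∀ c ∈ S, r + (i + 1) * (c : ℕ) < n := by
    intro r hr c hc
    have := (hSm c).mp hc
    omega
  refine ⟨Equiv.ofBijective s (Finite.injective_iff_bijective.mp hsinj), ?_, ?_, ?_⟩
  · intro c hc
    exact s1 c hc
  · intro c hc
    have := s2 c.rev (by rw [Fin.rev_rev]; exact hc)
    rw [Fin.rev_rev] at this
    exact this
  · intro r hr c
    rw [Equiv.ofBijective_apply]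
    rcases htri c with hc | hc | hc
    · rw [s1 c hc]
      have := hf1 c hc
      simp only [Miss, Finset.mem_filter, Finset.mem_univ, true_and] at this
      exact this r hr c (hmono r hr c hc)
    · rw [s2 c hc]
      have := hg1 _ hc
      simp only [Miss, Finset.mem_filter, Finset.mem_univ, true_and] at this
      have := this r hr _ (hmono r hr _ hc)
      simpa [Rv] using this
    · rw [s3 c hc]
      exact (hh1 c hc).2 r hr

theorem step [Nonempty (Fin n)] (A : ℕ → Equiv.Perm (Fin n)) (i : ℕ) (hn : 10 ≤ n)
    (hi : 2 ≤ i) (hin : 2 * (i + 1) ≤ n) (hInv : Inv A i) :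
    ∃ A' : ℕ → Equiv.Perm (Fin n), Inv A' (i + 1) := by
  obtain ⟨f, hf1, hf2, hf3, hf4⟩ := step_side (Lv A) (Rv A) i hInv.injL hInv.injR
  obtain ⟨g, hg1, hg2, hg3, hg4⟩ := step_side (Rv A) (Lv A) i hInv.injR hInv.injL
  obtain ⟨σ, hσ1, hσ2, hσ3⟩ := fill_row A i hn hi hin hInv f g hf1 hf2 hg1 hg2
  have key : ∃ A' : ℕ → Equiv.Perm (Fin n), (∀ r < i, A' r = A r) ∧ A' i = σ := by
    refine ⟨fun r => if r < i then A r else σ, ?_, ?_⟩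
    · intro r hr
      simp [hr]
    · simp
  obtain ⟨A', hA1, hA2⟩ := key
  have hL1 : ∀ r < i, Lv A' r = Lv A r := by
    intro r hr
    funext c
    simp [Lv, hA1 r hr]
  have hR1 : ∀ r < i, Rv A' r = Rv A r := by
    intro r hr
    funext c
    simp [Rv, hA1 r hr]
  have hL2 : ∀ c ∈ NewC n i, Lv A' i c = f c := by
    intro c hc
    simp [Lv, hA2, hσ1 c hc]
  have hR2 : ∀ c ∈ NewC n i, Rv A' i c = g c := by
    intro c hc
    simp [Rv, hA2, hσ2 c hc]
  have injL := side_inj (Lv A) (Lv A') i f hInv.injL hf1 hf2 hL1 hL2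
  have injR := side_inj (Rv A) (Rv A') i g hInv.injR hg1 hg2 hR1 hR2
  have surL := side_surj (Lv A) (Lv A') i f hf3 hL1 hL2
  have surR := side_surj (Rv A) (Rv A') i g hg3 hR1 hR2
  have hmul : ∀ t, i < t → ∀ c : Fin n, (i + 1) * (c : ℕ) ≤ t * c := by
    intro t ht c
    exact Nat.mul_le_mul_right _ ht
  have d1 : ∀ t, i < t → ∀ r < i + 1, ∀ r' < i + 1, ∀ c c' : Fin n, Lab n r c t → Lab n r' c' t →
      Lv A' r c ≠ Rv A' r' c' := by
    intro t ht r hr r' hr' c c' hl hl'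
    have hmem : ∀ c : Fin n, Lab n i c t → c ∈ NewC n i := by
      intro c hc
      simp only [NewC, Finset.mem_filter, Finset.mem_univ, true_and]
      have := hmul t ht c
      have := hc.1
      omega
    rcases Nat.lt_succ_iff_lt_or_eq.mp hr with h | h <;>
    rcases Nat.lt_succ_iff_lt_or_eq.mp hr' with h' | h'
    · rw [hL1 r h, hR1 r' h']
      exact hInv.d1 t ht r h r' h' c c' hl hl'
    · subst h'
      rw [hL1 r h, hR2 c' (hmem _ hl')]
      exact hg4 c' (hmem _ hl') t ht hl' r h c hl
    · subst h
      rw [hR1 r' h', hL2 c (hmem _ hl)]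
      exact (hf4 c (hmem _ hl) t ht hl r' h' c' hl').symm
    · subst h
      subst h'
      rw [hL2 c (hmem _ hl), hR2 c' (hmem _ hl')]
      intro he
      have m1 := hf1 c (hmem _ hl)
      have m2 := hg1 c' (hmem _ hl')
      rw [← he] at m2
      simp only [Miss, Finset.mem_filter, Finset.mem_univ, true_and] at m1 m2
      rcases hInv.d0 (f c) with ⟨q, hq, d, hd, hde⟩ | ⟨q, hq, d, hd, hde⟩
      · exact m1 q hq d hd hde
      · exact m2 q hq d hd hde
  refine ⟨A', ?_, ?_, ?_, ?_, ?_, ?_, ?_⟩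
  · intro r r' hrr hr' c
    rcases Nat.lt_succ_iff_lt_or_eq.mp hr' with h' | h'
    · rw [hA1 r (by omega), hA1 r' h']
      exact hInv.lat r r' hrr h' c
    · subst h'
      rw [hA1 r hrr, hA2]
      exact hσ3 r hrr c
  · intro r r' c c' hr hr' hc hc'
    have h1 := hmul (i + 1 + 1) (by omega) c
    have h2 := hmul (i + 1 + 1) (by omega) c'
    exact injL r r' c c' hr hr' (by omega) (by omega)
  · intro r r' c c' hr hr' hc hc'
    have h1 := hmul (i + 1 + 1) (by omega) c
    have h2 := hmul (i + 1 + 1) (by omega) c'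
    exact injR r r' c c' hr hr' (by omega) (by omega)
  · intro x
    obtain ⟨r, hr, c, hc, he⟩ := surL x
    obtain ⟨r', hr', c', hc', he'⟩ := surR x
    by_cases h1 : r + (i + 1 + 1) * (c : ℕ) < n
    · exact Or.inl ⟨r, hr, c, h1, he⟩
    · by_cases h2 : r' + (i + 1 + 1) * (c' : ℕ) < n
      · exact Or.inr ⟨r', hr', c', h2, he'⟩
      · exfalso
        exact d1 (i + 1) (by omega) r hr r' hr' c c' ⟨hc, by omega⟩ ⟨hc', by omega⟩
          (he.trans he'.symm)
  · intro t ht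
    exact d1 t (by omega)
  · intro j hj hji
    rcases Nat.lt_or_ge i j with h | h
    · have : j = i + 1 := by omega
      subst this
      intro x
      obtain ⟨r, hr, c, hc, he⟩ := surL x
      exact ⟨r, hr, c, by rw [mul_comm]; omega, he⟩
    · intro x
      obtain ⟨r, hr, c, hc, he⟩ := hInv.covL j hj h x
      exact ⟨r, hr, c, hc, by rw [hL1 r (by omega), he]⟩
  · intro j hj hji
    rcases Nat.lt_or_ge i j with h | h
    · have : j = i + 1 := by omega
      subst this
      intro x
      obtain ⟨r, hr, c, hc, he⟩ := surR x
      exact ⟨r, hr, c, by rw [mul_comm]; omega, he⟩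
    · intro x
      obtain ⟨r, hr, c, hc, he⟩ := hInv.covR j hj h x
      exact ⟨r, hr, c, hc, by rw [hR1 r (by omega), he]⟩


theorem card_nb_col (A : ℕ → Equiv.Perm (Fin n)) (i : ℕ) (hA : Lat A i) (c : Fin n) :
    (univ.filter (fun x => ¬ ∀ r < i, A r c ≠ x)).card = i := by
  have : univ.filter (fun x => ¬ ∀ r < i, A r c ≠ x) = (range i).image (fun r => A r c) := by
    ext x
    simp only [Finset.mem_filter, Finset.mem_univ, true_and, Finset.mem_image, Finset.mem_range]
    push Not
    rfl
  rw [this, Finset.card_image_of_injOn, Finset.card_range]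
  intro r hr r' hr' h
  simp only [Finset.coe_range, Set.mem_Iio] at hr hr'
  simp only at h
  rcases lt_trichotomy r r' with hl | hl | hl
  · exact (hA r r' hl hr' c h).elim
  · exact hl
  · exact (hA r' r hl hr c h.symm).elim

theorem card_nb_sym (A : ℕ → Equiv.Perm (Fin n)) (i : ℕ) (hA : Lat A i) (x : Fin n) :
    (univ.filter (fun c => ¬ ∀ r < i, A r c ≠ x)).card = i := by
  have : univ.filter (fun c => ¬ ∀ r < i, A r c ≠ x)
      = (range i).image (fun r => (A r).symm x) := by
    ext c
    simp only [Finset.mem_filter, Finset.mem_univ, true_and, Finset.mem_image, Finset.mem_range]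
    push Not
    constructor
    · rintro ⟨r, hr, he⟩
      exact ⟨r, hr, by rw [← he, Equiv.symm_apply_apply]⟩
    · rintro ⟨r, hr, he⟩
      exact ⟨r, hr, by rw [← he, Equiv.apply_symm_apply]⟩
  rw [this, Finset.card_image_of_injOn, Finset.card_range]
  intro r hr r' hr' h
  simp only [Finset.coe_range, Set.mem_Iio] at hr hr'
  simp only at h
  have e1 : A r ((A r).symm x) = x := Equiv.apply_symm_apply _ _
  have e2 : A r' ((A r).symm x) = x := by rw [h, Equiv.apply_symm_apply]
  rcases lt_trichotomy r r' with hl | hl | hl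
  · exact (hA r r' hl hr' _ (e1.trans e2.symm)).elim
  · exact hl
  · exact (hA r' r hl hr _ (e2.trans e1.symm)).elim

/-- Extension of a latin rectangle by one row. -/
theorem extend_one (A : ℕ → Equiv.Perm (Fin n)) (i : ℕ) (hA : Lat A i) (hi : i < n) :
    ∃ σ : Equiv.Perm (Fin n), ∀ r < i, ∀ c, A r c ≠ σ c := by
  classical
  have key : ∀ s : Finset (Fin n), s.card ≤
      (s.biUnion (fun c => univ.filter (fun x => ∀ r < i, A r c ≠ x))).card := by
    intro s
    have := Finset.card_mul_le_card_mul (s := s)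
      (t := s.biUnion (fun c => univ.filter (fun x => ∀ r < i, A r c ≠ x)))
      (fun c x => ∀ r < i, A r c ≠ x) (m := n - i) (n := n - i) (by
        intro c hc
        have h1 := card_nb_col A i hA c
        have h2 := Finset.card_filter_add_card_filter_not (s := (univ : Finset (Fin n)))
          (fun x => ∀ r < i, A r c ≠ x)
        rw [Finset.card_univ, Fintype.card_fin] at h2
        refine le_trans (show n - i ≤ (univ.filter (fun x => ∀ r < i, A r c ≠ x)).card by omega)
          (Finset.card_le_card ?_)
        intro x hx
        simp only [Finset.mem_bipartiteAbove, Finset.mem_biUnion]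
        exact ⟨⟨c, hc, hx⟩, by simpa using hx⟩) (by
        intro x hx
        have h1 := card_nb_sym A i hA x
        have h2 := Finset.card_filter_add_card_filter_not (s := (univ : Finset (Fin n)))
          (fun c => ∀ r < i, A r c ≠ x)
        rw [Finset.card_univ, Fintype.card_fin] at h2
        refine le_trans (Finset.card_le_card ?_)
          (show (univ.filter (fun c => ∀ r < i, A r c ≠ x)).card ≤ n - i by omega)
        intro c hc
        simp only [Finset.mem_bipartiteBelow] at hc
        simpa using hc.2)
    exact Nat.le_of_mul_le_mul_right this (by omega)
  obtain ⟨f, hf1, hf2⟩ := (Finset.all_card_le_biUnion_card_iff_exists_injective _).mp key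
  refine ⟨Equiv.ofBijective f (Finite.injective_iff_bijective.mp hf1), ?_⟩
  intro r hr c
  have := hf2 c
  simp only [Finset.mem_filter, Finset.mem_univ, true_and] at this
  exact this r hr

theorem append_row (A : ℕ → Equiv.Perm (Fin n)) (i : ℕ) (hA : Lat A i) (σ : Equiv.Perm (Fin n))
    (hσ : ∀ r < i, ∀ c, A r c ≠ σ c) :
    ∃ A' : ℕ → Equiv.Perm (Fin n), (∀ r < i, A' r = A r) ∧ A' i = σ ∧ Lat A' (i + 1) := by
  have key : ∃ A' : ℕ → Equiv.Perm (Fin n), (∀ r < i, A' r = A r) ∧ A' i = σ := by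
    refine ⟨fun r => if r < i then A r else σ, ?_, ?_⟩
    · intro r hr
      simp [hr]
    · simp
  obtain ⟨A', hA1, hA2⟩ := key
  refine ⟨A', hA1, hA2, ?_⟩
  intro r r' hrr hr' c
  rcases Nat.lt_succ_iff_lt_or_eq.mp hr' with h' | h'
  · rw [hA1 r (by omega), hA1 r' h']
    exact hA r r' hrr h' c
  · subst h'
    rw [hA1 r hrr, hA2]
    exact hσ r hrr c

theorem complete (A : ℕ → Equiv.Perm (Fin n)) (i : ℕ) (hA : Lat A i) (hi : i ≤ n) :
    ∃ A' : ℕ → Equiv.Perm (Fin n), (∀ r < i, A' r = A r) ∧ Lat A' n := by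
  have : ∀ d, i + d ≤ n → ∃ A' : ℕ → Equiv.Perm (Fin n), (∀ r < i, A' r = A r) ∧
      Lat A' (i + d) := by
    intro d
    induction d with
    | zero => intro _; exact ⟨A, fun _ _ => rfl, hA⟩
    | succ d ih =>
      intro hd
      obtain ⟨B, hB1, hB2⟩ := ih (by omega)
      obtain ⟨σ, hσ⟩ := extend_one B (i + d) hB2 (by omega)
      obtain ⟨C, hC1, hC2, hC3⟩ := append_row B (i + d) hB2 σ hσ
      exact ⟨C, fun r hr => by rw [hC1 r (by omega), hB1 r hr], hC3⟩
  obtain ⟨A', h1, h2⟩ := this (n - i) (by omega)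
  refine ⟨A', h1, ?_⟩
  rwa [show i + (n - i) = n by omega] at h2

/-- Hall-type lemma for the middle row when `n = 2 * k + 1`. -/
theorem hallLast (k : ℕ) (hk : n = 2 * k + 1) (R : Fin n → Fin n → Prop)
    [∀ x c, Decidable (R x c)]
    (hx : ∀ x, (univ.filter (fun c => ¬ R x c)).card = k)
    (hc : ∀ c, (univ.filter (fun x => ¬ R x c)).card = k)
    (x0 y0 a b a' b' : Fin n) (hab : a ≠ b) (hab' : a' ≠ b') (hxy : x0 ≠ y0)
    (ha : R x0 a) (hb : R x0 b) (ha' : R y0 a') (hb' : R y0 b') :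
    ∃ f : Fin n → Fin n, Function.Injective f ∧ (∀ x, R x (f x)) ∧ (f x0 = a ∨ f x0 = b) ∧
      (f y0 = a' ∨ f y0 = b') := by
  classical
  set t : Fin n → Finset (Fin n) := fun x =>
    if x = x0 then {a, b} else if x = y0 then {a', b'} else univ.filter (R x) with ht
  have t1 : t x0 = {a, b} := by simp [ht]
  have t2 : t y0 = {a', b'} := by simp [ht, hxy.symm]
  have t3 : ∀ x, x ≠ x0 → x ≠ y0 → t x = univ.filter (R x) := by
    intro x h1 h2
    simp [ht, h1, h2]
  have hdeg : ∀ x, (univ.filter (R x)).card = k + 1 := by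
    intro x
    have h1 := hx x
    have h2 := Finset.card_filter_add_card_filter_not (s := (univ : Finset (Fin n))) (R x)
    rw [Finset.card_univ, Fintype.card_fin] at h2
    omega
  have key : ∀ X : Finset (Fin n), X.card ≤ (X.biUnion t).card := by
    intro X
    by_contra hlt
    push Not at hlt
    set N := X.biUnion t with hN
    have hsub : ∀ x ∈ X, t x ⊆ N := fun x hx => Finset.subset_biUnion_of_mem t hx
    set Y := X \ {x0, y0} with hY
    have hXY : X.card ≤ Y.card + (X ∩ {x0, y0}).card := by
      rw [hY, Finset.card_sdiff_add_card_inter]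
    have hI : (X ∩ {x0, y0}).card ≤ 2 :=
      le_trans (Finset.card_le_card Finset.inter_subset_right) Finset.card_le_two
    have hYm : ∀ y, y ∈ Y ↔ y ∈ X ∧ y ≠ x0 ∧ y ≠ y0 := by
      intro y
      simp [hY]
    rcases Finset.eq_empty_or_nonempty Y with hYe | ⟨y, hy⟩
    · rw [hYe, Finset.card_empty] at hXY
      have hXne : X.Nonempty := by
        rw [Finset.nonempty_iff_ne_empty]
        rintro rfl
        simp at hlt
      obtain ⟨x, hxX⟩ := hXne
      have hcard : (t x).card = 2 := by
        by_cases h1 : x = x0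
        · rw [h1, t1, Finset.card_pair hab]
        · by_cases h2 : x = y0
          · rw [h2, t2, Finset.card_pair hab']
          · have : x ∈ Y := (hYm x).mpr ⟨hxX, h1, h2⟩
            rw [hYe] at this
            simp at this
      have := Finset.card_le_card (hsub x hxX)
      omega
    · have hy' := (hYm y).mp hy
      have h1 := Finset.card_le_card (hsub y hy'.1)
      rw [t3 y hy'.2.1 hy'.2.2, hdeg] at h1
      have hXn : X.card ≤ n := by
        have := Finset.card_le_univ X
        rwa [Fintype.card_fin] at this
      have hYnon : ∀ c, c ∉ N → Y ⊆ univ.filter (fun x => ¬ R x c) := by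
        intro c hcN z hz
        have hz' := (hYm z).mp hz
        simp only [Finset.mem_filter, Finset.mem_univ, true_and]
        intro hR
        apply hcN
        apply hsub z hz'.1
        rw [t3 z hz'.2.1 hz'.2.2]
        simp [hR]
      have hex : ∃ c, c ∉ N := by
        by_contra hcon
        push Not at hcon
        have : N = univ := Finset.eq_univ_iff_forall.mpr hcon
        rw [this, Finset.card_univ, Fintype.card_fin] at hlt
        omega
      obtain ⟨c, hcN⟩ := hex
      have h2 := Finset.card_le_card (hYnon c hcN)
      rw [hc c] at h2
      have hxX : x0 ∈ X := by
        by_contra hcon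
        have : (X ∩ {x0, y0}).card ≤ 1 := by
          refine le_trans (Finset.card_le_card (t := {y0}) ?_) (by simp)
          intro z hz
          simp only [Finset.mem_inter, Finset.mem_insert, Finset.mem_singleton] at hz ⊢
          rcases hz with ⟨hz1, rfl | hz2⟩
          · exact (hcon hz1).elim
          · exact hz2
        omega
      have hYk : Y.card = k := by omega
      have hNk : N.card = k + 1 := by omega
      have hall : ∀ d, d ∉ N → R x0 d := by
        intro d hd
        have h3 := Finset.eq_of_subset_of_card_le (hYnon d hd) (by rw [hc d, hYk])
        by_contra hR
        have : x0 ∈ Y := by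
          rw [h3]
          simp [hR]
        exact ((hYm x0).mp this).2.1 rfl
      have haN : a ∈ N := hsub x0 hxX (by rw [t1]; simp)
      have hbN : b ∈ N := hsub x0 hxX (by rw [t1]; simp)
      have h4 : (insert a (insert b Nᶜ)) ⊆ univ.filter (R x0) := by
        intro d hd
        simp only [Finset.mem_insert, Finset.mem_compl] at hd
        simp only [Finset.mem_filter, Finset.mem_univ, true_and]
        rcases hd with rfl | rfl | hd
        · exact ha
        · exact hb
        · exact hall d hd
      have h5 := Finset.card_le_card h4
      rw [hdeg, Finset.card_insert_of_notMem (by simp [hab, haN]),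
        Finset.card_insert_of_notMem (by simp [hbN]), Finset.card_compl, Fintype.card_fin,
        hNk] at h5
      omega
  obtain ⟨f, hf1, hf2⟩ := (Finset.all_card_le_biUnion_card_iff_exists_injective _).mp key
  have e1 := hf2 x0
  have e2 := hf2 y0
  rw [t1] at e1
  rw [t2] at e2
  simp only [Finset.mem_insert, Finset.mem_singleton] at e1 e2
  refine ⟨f, hf1, ?_, e1, e2⟩
  intro x
  by_cases h1 : x = x0
  · subst h1
    rcases e1 with h | h <;> rw [h] <;> assumption
  · by_cases h2 : x = y0
    · subst h2
      rcases e2 with h | h <;> rw [h] <;> assumption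
    · have := hf2 x
      rw [t3 x h1 h2] at this
      simpa using this

theorem last_odd (A : ℕ → Equiv.Perm (Fin n)) (k : ℕ) (hk : n = 2 * k + 1) (hk1 : 4 ≤ k)
    (hInv : Inv A k) :
    ∃ A' : ℕ → Equiv.Perm (Fin n), Lat A' (k + 1) ∧
      (∀ j, 1 ≤ j → j ≤ k + 1 → Cov (Lv A') j ∧ Cov (Rv A') j) := by
  classical
  have hdiv : n / (k + 1) = 1 := by
    rw [Nat.div_eq_iff (by omega)]
    omega
  obtain ⟨x0, hx0⟩ := Finset.card_eq_one.mp ((card_Miss _ _ hInv.injL).trans hdiv)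
  obtain ⟨y0, hy0⟩ := Finset.card_eq_one.mp ((card_Miss _ _ hInv.injR).trans hdiv)
  have mL : ∀ x, (∀ r < k, ∀ c : Fin n, r + (k + 1) * c < n → Lv A r c ≠ x) ↔ x = x0 := by
    intro x
    rw [← Finset.mem_singleton, ← hx0]
    simp [Miss]
  have mR : ∀ x, (∀ r < k, ∀ c : Fin n, r + (k + 1) * c < n → Rv A r c ≠ x) ↔ x = y0 := by
    intro x
    rw [← Finset.mem_singleton, ← hy0]
    simp [Miss]
  have hxy : x0 ≠ y0 := by
    intro h
    rcases hInv.d0 x0 with ⟨r, hr, c, hc, he⟩ | ⟨r, hr, c, hc, he⟩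
    · exact (mL x0).mpr rfl r hr c hc he
    · exact (mR x0).mpr h r hr c hc he
  have hL := (mL x0).mpr rfl
  have hR := (mR y0).mpr rfl
  obtain ⟨f, hf1, hf2, hf3, hf4⟩ := hallLast k hk (fun x c => ∀ r < k, A r c ≠ x)
    (fun x => card_nb_sym A k hInv.lat x) (fun c => card_nb_col A k hInv.lat c) x0 y0
    ⟨0, by omega⟩ ⟨1, by omega⟩ (Fin.rev ⟨0, by omega⟩) (Fin.rev ⟨1, by omega⟩)
    (by simp) (by simp) hxy
    (fun r hr => hL r hr ⟨0, by omega⟩ (by simp only; omega))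
    (fun r hr => hL r hr ⟨1, by omega⟩ (by simp only; omega))
    (fun r hr => hR r hr ⟨0, by omega⟩ (by simp only; omega))
    (fun r hr => hR r hr ⟨1, by omega⟩ (by simp only; omega))
  set τ := Equiv.ofBijective f (Finite.injective_iff_bijective.mp hf1) with hτ
  have hτf : ∀ x, τ x = f x := fun x => rfl
  obtain ⟨A', hA1, hA2, hA3⟩ := append_row A k hInv.lat τ.symm (by
    intro r hr c
    have := hf2 (τ.symm c) r hr
    rwa [← hτf, Equiv.apply_symm_apply] at this)
  have hA2' : ∀ x, A' k (f x) = x := by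
    intro x
    rw [hA2, ← hτf, Equiv.symm_apply_apply]
  have hsm : ∀ (r : ℕ) (c : Fin n), r + (k + 1) * c < n → (c : ℕ) * (k + 1) < n := by
    intro r c h
    rw [mul_comm]
    omega
  refine ⟨A', hA3, ?_⟩
  intro j hj hjk
  rcases Nat.lt_or_ge k j with h | h
  · have : j = k + 1 := by omega
    subst this
    constructor
    · intro x
      by_cases hx : x = x0
      · subst hx
        rcases hf3 with h | h
        · exact ⟨k, by omega, ⟨0, by omega⟩, by simp only; omega, (by rw [← h]; exact hA2' x : A' k _ = x)⟩
        · exact ⟨k, by omega, ⟨1, by omega⟩, by simp only; omega, (by rw [← h]; exact hA2' x : A' k _ = x)⟩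
      · have := mt (mL x).mp hx
        push Not at this
        obtain ⟨r, hr, c, hc, he⟩ := this
        refine ⟨r, by omega, c, hsm r c hc, ?_⟩
        rw [← he]
        simp [Lv, hA1 r hr]
    · intro x
      by_cases hx : x = y0
      · subst hx
        rcases hf4 with h | h
        · exact ⟨k, by omega, ⟨0, by omega⟩, by simp only; omega,
            (by rw [← h]; exact hA2' x : A' k (Fin.rev _) = x)⟩
        · exact ⟨k, by omega, ⟨1, by omega⟩, by simp only; omega,
            (by rw [← h]; exact hA2' x : A' k (Fin.rev _) = x)⟩
      · have := mt (mR x).mp hx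
        push Not at this
        obtain ⟨r, hr, c, hc, he⟩ := this
        refine ⟨r, by omega, c, hsm r c hc, ?_⟩
        rw [← he]
        simp [Rv, hA1 r hr]
  · constructor
    · intro x
      obtain ⟨r, hr, c, hc, he⟩ := hInv.covL j hj h x
      refine ⟨r, hr, c, hc, ?_⟩
      rw [← he]
      simp [Lv, hA1 r (by omega)]
    · intro x
      obtain ⟨r, hr, c, hc, he⟩ := hInv.covR j hj h x
      refine ⟨r, hr, c, hc, ?_⟩
      rw [← he]
      simp [Rv, hA1 r (by omega)]

/-- Second row of the starting configuration. -/
def s2 (n c : ℕ) : ℕ :=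
  if c < n - n / 2 then
    n - 1 - (if c + n / 4 < n - n / 2 then c + n / 4 else c + n / 4 - (n - n / 2))
  else
    (if n - 1 - c + n / 4 < n / 2 then n - 1 - c + n / 4 else n - 1 - c + n / 4 - n / 2)

theorem s2_lt (hn : 10 ≤ n) (c : Fin n) : s2 n c < n := by
  have := c.2
  unfold s2
  split_ifs <;> omega

theorem s2_inj (hn : 10 ≤ n) : Function.Injective (fun c : Fin n => (⟨s2 n c, s2_lt hn c⟩ : Fin n)) := by
  intro c c' h
  have h1 := c.2
  have h2 := c'.2
  have h : s2 n c = s2 n c' := congrArg Fin.val h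
  apply Fin.ext
  unfold s2 at h
  split_ifs at h <;> omega

noncomputable def row2 (hn : 10 ≤ n) : Equiv.Perm (Fin n) :=
  Equiv.ofBijective _ (Finite.injective_iff_bijective.mp (s2_inj hn))

noncomputable def A2 (hn : 10 ≤ n) (r : ℕ) : Equiv.Perm (Fin n) :=
  if r = 0 then Equiv.refl _ else row2 hn

/-- left part value -/
def sl (n c : ℕ) : ℕ :=
  n - 1 - (if c + n / 4 < n - n / 2 then c + n / 4 else c + n / 4 - (n - n / 2))

/-- right part value -/
def sr (n c : ℕ) : ℕ :=
  if c + n / 4 < n / 2 then c + n / 4 else c + n / 4 - n / 2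

theorem L0 (hn : 10 ≤ n) (c : Fin n) : ((Lv (A2 hn) 0 c : Fin n) : ℕ) = c := by
  simp [Lv, A2]

theorem R0 (hn : 10 ≤ n) (c : Fin n) : ((Rv (A2 hn) 0 c : Fin n) : ℕ) = n - 1 - c := by
  simp [Rv, A2, Fin.val_rev]; omega

theorem L1 (hn : 10 ≤ n) (c : Fin n) (hc : (c : ℕ) < n - n / 2) :
    ((Lv (A2 hn) 1 c : Fin n) : ℕ) = sl n c := by
  simp [Lv, A2, row2, s2, sl, hc]

theorem R1 (hn : 10 ≤ n) (c : Fin n) (hc : (c : ℕ) < n / 2) :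
    ((Rv (A2 hn) 1 c : Fin n) : ℕ) = sr n c := by
  have h1 : ¬ (n - (c + 1 : ℕ) < n - n / 2) := by omega
  have h2 : n - 1 - (n - (c + 1 : ℕ)) = c := by omega
  simp only [Rv, A2, row2, s2, sr, Equiv.ofBijective_apply, Fin.val_rev, h1, h2, if_false,
    one_ne_zero]

theorem two_cases {r : ℕ} (h : r < 2) : r = 0 ∨ r = 1 := by omega

theorem base (hn : 10 ≤ n) : ∃ A : ℕ → Equiv.Perm (Fin n), Inv A 2 := by
  refine ⟨A2 hn, ?_, ?_, ?_, ?_, ?_, ?_, ?_⟩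
  · intro r r' h h' c he
    obtain rfl : r = 0 := by omega
    obtain rfl : r' = 1 := by omega
    have he : ((A2 hn 0 c : Fin n) : ℕ) = (A2 hn 1 c : Fin n) := congrArg Fin.val he
    have := c.2
    simp [A2, row2, s2] at he
    split_ifs at he <;> omega
  · intro r r' c c' hr hr' hc hc' he
    have he := congrArg Fin.val he
    rcases two_cases hr with rfl | rfl <;> rcases two_cases hr' with rfl | rfl
    · rw [L0, L0] at he
      exact ⟨rfl, Fin.ext he⟩
    · rw [L0, L1 hn c' (by omega), sl] at he
      split_ifs at he <;> omega
    · rw [L0, L1 hn c (by omega), sl] at he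
      split_ifs at he <;> omega
    · rw [L1 hn c (by omega), L1 hn c' (by omega), sl, sl] at he
      refine ⟨rfl, Fin.ext ?_⟩
      split_ifs at he <;> omega
  · intro r r' c c' hr hr' hc hc' he
    have he := congrArg Fin.val he
    rcases two_cases hr with rfl | rfl <;> rcases two_cases hr' with rfl | rfl
    · rw [R0, R0] at he
      exact ⟨rfl, Fin.ext (by omega)⟩
    · rw [R0, R1 hn c' (by omega), sr] at he
      split_ifs at he <;> omega
    · rw [R0, R1 hn c (by omega), sr] at he
      split_ifs at he <;> omega
    · rw [R1 hn c (by omega), R1 hn c' (by omega), sr, sr] at he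
      refine ⟨rfl, Fin.ext ?_⟩
      split_ifs at he <;> omega
  · intro x
    have hx := x.2
    by_cases h1 : (x : ℕ) < n / 2
    · by_cases h2 : 3 * (x : ℕ) < n
      · exact Or.inl ⟨0, by omega, x, by omega, Fin.ext (L0 hn x)⟩
      · refine Or.inr ⟨1, by omega, ⟨x - n / 4, by omega⟩, by simp only; omega, Fin.ext ?_⟩
        rw [R1 hn _ (by simp only; omega), sr]
        simp only
        split_ifs <;> omega
    · by_cases h2 : 3 * (n - 1 - (x : ℕ)) < n
      · refine Or.inr ⟨0, by omega, ⟨n - 1 - x, by omega⟩, by simp only; omega, Fin.ext ?_⟩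
        rw [R0]
        simp only
        omega
      · refine Or.inl ⟨1, by omega, ⟨n - 1 - x - n / 4, by omega⟩, by simp only; omega,
          Fin.ext ?_⟩
        rw [L1 hn _ (by simp only; omega), sl]
        simp only
        split_ifs <;> omega
  · intro t ht r hr r' hr' c c' hl hl' he
    obtain ⟨ha, hb⟩ := hl
    obtain ⟨ha', hb'⟩ := hl'
    have he := congrArg Fin.val he
    have e1 : 3 * (c : ℕ) ≤ t * c := Nat.mul_le_mul_right _ ht
    have e2 : 3 * (c' : ℕ) ≤ t * c' := Nat.mul_le_mul_right _ ht
    have e3 : 3 * (n / 4) ≤ t * (n / 4) := Nat.mul_le_mul_right _ ht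
    have e4 : 3 * (n / 2 - n / 4) ≤ t * (n / 2 - n / 4) := Nat.mul_le_mul_right _ ht
    have e5 : 3 * (n - n / 2 - n / 4) ≤ t * (n - n / 2 - n / 4) := Nat.mul_le_mul_right _ ht
    rw [add_mul] at hb hb'
    have key : ∀ a b d : ℕ, a = b + d → t * a = t * b + t * d := by
      intro a b d h
      rw [h, mul_add]
    rcases two_cases hr with rfl | rfl <;> rcases two_cases hr' with rfl | rfl
    · rw [L0, R0] at he
      omega
    · rw [L0, R1 hn c' (by omega), sr] at he
      split_ifs at he
      · have := key _ _ _ he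
        omega
      · have := key c' c (n / 2 - n / 4) (by omega)
        omega
    · rw [R0, L1 hn c (by omega), sl] at he
      split_ifs at he
      · have := key c' c (n / 4) (by omega)
        omega
      · have := key c c' (n - n / 2 - n / 4) (by omega)
        omega
    · rw [R1 hn c' (by omega), L1 hn c (by omega), sl, sr] at he
      split_ifs at he <;> omega
  · intro j h1 h2 x
    have hx := x.2
    have : j = 1 ∨ j = 2 := by omega
    rcases this with rfl | rfl
    · exact ⟨0, by omega, x, by omega, Fin.ext (L0 hn x)⟩
    · by_cases h : 2 * (x : ℕ) < n
      · exact ⟨0, by omega, x, by omega, Fin.ext (L0 hn x)⟩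
      · by_cases h' : n / 4 ≤ n - 1 - x
        · refine ⟨1, by omega, ⟨n - 1 - x - n / 4, by omega⟩, by simp only; omega, Fin.ext ?_⟩
          rw [L1 hn _ (by simp only; omega), sl]
          simp only
          split_ifs <;> omega
        · refine ⟨1, by omega, ⟨n - 1 - x + (n - n / 2) - n / 4, by omega⟩,
            by simp only; omega, Fin.ext ?_⟩
          rw [L1 hn _ (by simp only; omega), sl]
          simp only
          split_ifs <;> omega
  · intro j h1 h2 x
    have hx := x.2
    have : j = 1 ∨ j = 2 := by omega
    have h0 : ((Rv (A2 hn) 0 x.rev : Fin n) : ℕ) = x := by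
      rw [R0, Fin.val_rev]; omega
    have hv : (x.rev : ℕ) = n - (x + 1) := Fin.val_rev x
    rcases this with rfl | rfl
    · exact ⟨0, by omega, x.rev, by omega, Fin.ext h0⟩
    · by_cases h : 2 * (n - 1 - (x : ℕ)) < n
      · exact ⟨0, by omega, x.rev, by omega, Fin.ext h0⟩
      · by_cases h' : n / 4 ≤ x
        · refine ⟨1, by omega, ⟨x - n / 4, by omega⟩, by simp only; omega, Fin.ext ?_⟩
          rw [R1 hn _ (by simp only; omega), sr]
          simp only
          split_ifs <;> omega
        · refine ⟨1, by omega, ⟨x + n / 2 - n / 4, by omega⟩,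
            by simp only; omega, Fin.ext ?_⟩
          rw [R1 hn _ (by simp only; omega), sr]
          simp only
          split_ifs <;> omega

theorem iterate (hn : 10 ≤ n) (k : ℕ) (hk : 2 ≤ k) (hkn : 2 * k ≤ n) :
    ∃ A : ℕ → Equiv.Perm (Fin n), Inv A k := by
  have : Nonempty (Fin n) := ⟨⟨0, by omega⟩⟩
  induction k, hk using Nat.le_induction with
  | base => exact base hn
  | succ k hk ih =>
    obtain ⟨A, hA⟩ := ih (by omega)
    exact step A k hn hk hkn hA

theorem half (hn : 10 ≤ n) : ∃ (K : ℕ) (A : ℕ → Equiv.Perm (Fin n)), n ≤ 2 * K ∧ K < n ∧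
    Lat A K ∧ ∀ j, 1 ≤ j → j ≤ K → Cov (Lv A) j ∧ Cov (Rv A) j := by
  obtain ⟨A, hA⟩ := iterate hn (n / 2) (by omega) (by omega)
  by_cases h : n % 2 = 0
  · exact ⟨n / 2, A, by omega, by omega, hA.lat,
      fun j h1 h2 => ⟨hA.covL j h1 h2, hA.covR j h1 h2⟩⟩
  · obtain ⟨A', h1, h2⟩ := last_odd A (n / 2) (by omega) (by omega) hA
    exact ⟨n / 2 + 1, A', by omega, by omega, h1, h2⟩

theorem Cov.mono {P : ℕ → Fin n → Fin n} {K j : ℕ} (hK : n ≤ 2 * K) (h : Cov P K) (hj : K ≤ j)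
    (hjn : j < n) : Cov P j := by
  intro x
  obtain ⟨r, hr, c, hc, he⟩ := h x
  refine ⟨r, by omega, c, ?_, he⟩
  have : (c : ℕ) < 2 := by
    by_contra h'
    have : 2 * K ≤ (c : ℕ) * K := Nat.mul_le_mul_right _ (by omega)
    omega
  have : (c : ℕ) * j ≤ 1 * j := Nat.mul_le_mul_right _ (by omega)
  omega

theorem Cov.last (A : ℕ → Equiv.Perm (Fin n)) (hA : Lat A n) (c0 : Fin n) (x : Fin n) :
    ∃ r < n, A r c0 = x := by
  have hi : Function.Injective (fun r : Fin n => A r c0) := by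
    intro r r' h
    rcases lt_trichotomy r r' with h1 | h1 | h1
    · exact absurd h (hA r r' h1 r'.2 c0)
    · exact h1
    · exact absurd h.symm (hA r' r h1 r.2 c0)
  obtain ⟨r, hr⟩ := (Finite.injective_iff_surjective.mp hi) x
  exact ⟨r, r.2, hr⟩

theorem big (hn : 10 ≤ n) : ∃ A : ℕ → Equiv.Perm (Fin n), Lat A n ∧
    ∀ j, 1 ≤ j → j ≤ n → Cov (Lv A) j ∧ Cov (Rv A) j := by
  obtain ⟨K, A, hK, hKn, hL, hC⟩ := half hn
  obtain ⟨A', h1, h2⟩ := complete A K hL (by omega)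
  have small : ∀ j, 1 ≤ j → j ≤ K → Cov (Lv A') j ∧ Cov (Rv A') j := by
    intro j hj hjK
    constructor
    · intro x
      obtain ⟨r, hr, c, hc, he⟩ := (hC j hj hjK).1 x
      exact ⟨r, hr, c, hc, by rw [← he]; simp [Lv, h1 r (by omega)]⟩
    · intro x
      obtain ⟨r, hr, c, hc, he⟩ := (hC j hj hjK).2 x
      exact ⟨r, hr, c, hc, by rw [← he]; simp [Rv, h1 r (by omega)]⟩
  refine ⟨A', h2, ?_⟩
  intro j hj hjn
  rcases Nat.lt_or_ge K j with h | h
  · rcases Nat.lt_or_ge j n with h' | h'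
    · have := small K (by omega) le_rfl
      exact ⟨this.1.mono hK h.le h', this.2.mono hK h.le h'⟩
    · obtain rfl : j = n := by omega
      constructor
      · intro x
        obtain ⟨r, hr, he⟩ := Cov.last A' h2 ⟨0, by omega⟩ x
        exact ⟨r, hr, ⟨0, by omega⟩, by simp only; omega, he⟩
      · intro x
        obtain ⟨r, hr, he⟩ := Cov.last A' h2 (Fin.rev ⟨0, by omega⟩) x
        exact ⟨r, hr, ⟨0, by omega⟩, by simp only; omega, he⟩
  · exact small j hj h

/-- From the internal format to the format of the theorem. -/
theorem interface (B : ℕ → Fin n → Fin n)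
    (hrow : ∀ r < n, ∀ c c' : Fin n, B r c = B r c' → c = c')
    (hcol : ∀ r < n, ∀ r' < n, ∀ c : Fin n, B r c = B r' c → r = r')
    (hl : ∀ j, 1 ≤ j → j ≤ n → Cov B j)
    (hr : ∀ j, 1 ≤ j → j ≤ n → Cov (fun r c => B r c.rev) j) :
    ∃ A : ℕ → ℕ → ℕ,
      (∀ i ∈ Finset.Icc 1 n,
        Set.BijOn (A i) ↑(Finset.Icc 1 n) ↑(Finset.Icc 1 n)) ∧
      (∀ j ∈ Finset.Icc 1 n,
        Set.BijOn (fun i => A i j) ↑(Finset.Icc 1 n) ↑(Finset.Icc 1 n)) ∧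
      (∀ i ∈ Finset.Icc 1 n, ∀ s ∈ Finset.Icc 1 n,
        (∃ r ∈ Finset.Icc 1 i, ∃ c ∈ Finset.Icc 1 ((n + i - 1) / i),
            A r c = s) ∧
        (∃ r ∈ Finset.Icc 1 i, ∃ c ∈ Finset.Icc 1 ((n + i - 1) / i),
            A r (n + 1 - c) = s)) := by
  let A : ℕ → ℕ → ℕ := fun i j =>
    if h : 1 ≤ j ∧ j ≤ n then (B (i - 1) ⟨j - 1, by omega⟩ : ℕ) + 1 else 0
  have hA : ∀ i j, ∀ h : 1 ≤ j ∧ j ≤ n, A i j = (B (i - 1) ⟨j - 1, by omega⟩ : ℕ) + 1 := by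
    intro i j h
    exact dif_pos h
  have bij : ∀ f : ℕ → ℕ, Set.MapsTo f ↑(Finset.Icc 1 n) ↑(Finset.Icc 1 n) →
      Set.InjOn f ↑(Finset.Icc 1 n) → Set.BijOn f ↑(Finset.Icc 1 n) ↑(Finset.Icc 1 n) := by
    intro f h1 h2
    exact ⟨h1, h2, Finset.surjOn_of_injOn_of_card_le f h1 h2 le_rfl⟩
  have hdiv : ∀ (c : Fin n) (j : ℕ), 1 ≤ j → (c : ℕ) * j < n → (c : ℕ) + 1 ≤ (n + j - 1) / j := by
    intro c j hj h
    rw [Nat.le_div_iff_mul_le (by omega), add_mul]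
    omega
  refine ⟨A, ?_, ?_, ?_⟩
  · intro i hi
    rw [Finset.mem_Icc] at hi
    apply bij
    · intro j hj
      rw [Finset.mem_coe, Finset.mem_Icc] at hj ⊢
      rw [hA _ _ hj]
      omega
    · intro j hj j' hj' he
      rw [Finset.mem_coe, Finset.mem_Icc] at hj hj'
      rw [hA _ _ hj, hA _ _ hj'] at he
      have := congrArg Fin.val (hrow (i - 1) (by omega) _ _ (Fin.ext (by omega)) :
        (⟨j - 1, by omega⟩ : Fin n) = ⟨j' - 1, by omega⟩)
      simp only at this
      omega
  · intro j hj
    rw [Finset.mem_Icc] at hj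
    apply bij
    · intro i hi
      rw [Finset.mem_coe, Finset.mem_Icc] at hi ⊢
      simp only
      rw [hA _ _ hj]
      omega
    · intro i hi i' hi' he
      rw [Finset.mem_coe, Finset.mem_Icc] at hi hi'
      simp only at he
      rw [hA _ _ hj, hA _ _ hj] at he
      have := hcol (i - 1) (by omega) (i' - 1) (by omega) ⟨j - 1, by omega⟩ (Fin.ext (by omega))
      omega
  · intro i hi s hs
    rw [Finset.mem_Icc] at hi hs
    constructor
    · obtain ⟨r, hr, c, hc, he⟩ := hl i hi.1 hi.2 ⟨s - 1, by omega⟩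
      have hc2 := c.2
      refine ⟨r + 1, Finset.mem_Icc.mpr (by omega), c + 1,
        Finset.mem_Icc.mpr ⟨by omega, hdiv c i hi.1 hc⟩, ?_⟩
      rw [hA _ _ (by omega)]
      have he := congrArg Fin.val he
      simp only [Nat.add_sub_cancel, Fin.eta] at he ⊢
      omega
    · obtain ⟨r, hr, c, hc, he⟩ := hr i hi.1 hi.2 ⟨s - 1, by omega⟩
      have hc2 := c.2
      refine ⟨r + 1, Finset.mem_Icc.mpr (by omega), c + 1,
        Finset.mem_Icc.mpr ⟨by omega, hdiv c i hi.1 hc⟩, ?_⟩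
      rw [hA _ _ (by omega)]
      have he := congrArg Fin.val he
      have e : (⟨n + 1 - ((c : ℕ) + 1) - 1, by omega⟩ : Fin n) = c.rev := by
        apply Fin.ext
        rw [Fin.val_rev]
        simp only
        omega
      rw [e]
      simp only [Nat.add_sub_cancel] at he ⊢
      omega

/-- A square given by a list of rows. -/
def tab (l : List (List ℕ)) (m : ℕ) (r : ℕ) (c : Fin (m + 1)) : Fin (m + 1) :=
  Fin.ofNat (m + 1) ((l.getD r []).getD c 0)

/-- All the required properties, in a decidable form. -/
def Good (m : ℕ) (B : ℕ → Fin (m + 1) → Fin (m + 1)) : Prop :=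
  (∀ r < m + 1, ∀ c c' : Fin (m + 1), B r c = B r c' → c = c') ∧
  (∀ r < m + 1, ∀ r' < m + 1, ∀ c : Fin (m + 1), B r c = B r' c → r = r') ∧
  (∀ j < m + 2, 1 ≤ j → ∀ x, ∃ r < j, ∃ c : Fin (m + 1), (c : ℕ) * j < m + 1 ∧ B r c = x) ∧
  (∀ j < m + 2, 1 ≤ j → ∀ x, ∃ r < j, ∃ c : Fin (m + 1), (c : ℕ) * j < m + 1 ∧ B r c.rev = x)

instance (m : ℕ) (B : ℕ → Fin (m + 1) → Fin (m + 1)) : Decidable (Good m B) := by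
  unfold Good
  infer_instance

theorem small : ∀ m < 9, ∃ B : ℕ → Fin (m + 1) → Fin (m + 1), Good m B := by
  intro m hm
  interval_cases m
  · exact ⟨tab [[0]] 0, by decide +kernel⟩
  · exact ⟨tab [[0,1],[1,0]] 1, by decide +kernel⟩
  · exact ⟨tab [[0,1,2],[2,0,1],[1,2,0]] 2, by decide +kernel⟩
  · exact ⟨tab [[0,1,2,3],[2,3,0,1],[1,2,3,0],[3,0,1,2]] 3, by decide +kernel⟩
  · exact ⟨tab [[0,1,2,3,4],[4,3,1,2,0],[3,2,0,4,1],[2,0,4,1,3],[1,4,3,0,2]] 4,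
      by decide +kernel⟩
  · exact ⟨tab [[0,1,2,3,4,5],[3,5,4,1,0,2],[2,4,0,5,1,3],[1,3,5,4,2,0],[5,2,1,0,3,4],
      [4,0,3,2,5,1]] 5, by decide +kernel⟩
  · exact ⟨tab [[0,1,2,3,4,5,6],[6,3,4,5,1,0,2],[4,0,5,2,6,1,3],[5,2,6,0,3,4,1],
      [2,4,3,1,5,6,0],[1,5,0,6,2,3,4],[3,6,1,4,0,2,5]] 6, by decide +kernel⟩
  · exact ⟨tab [[0,1,2,3,4,5,6,7],[4,5,7,6,1,3,0,2],[6,3,0,7,2,4,1,5],[2,7,1,0,5,6,4,3],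
      [3,2,4,5,6,0,7,1],[7,4,6,2,3,1,5,0],[5,6,3,1,0,7,2,4],[1,0,5,4,7,2,3,6]] 7,
      by decide +kernel⟩
  · exact ⟨tab [[0,1,2,3,4,5,6,7,8],[8,4,5,6,7,0,2,3,1],[7,6,3,8,2,1,5,4,0],
      [1,5,7,4,0,6,3,8,2],[3,2,8,0,1,4,7,5,6],[6,8,1,2,5,7,4,0,3],[4,7,0,1,6,3,8,2,5],
      [5,3,6,7,8,2,0,1,4],[2,0,4,5,3,8,1,6,7]] 8, by decide +kernel⟩

end LRPA


/-- For every positive integer `n` there exists a type-1,2 latin retransmission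
permutation array of order `n`: a latin square of order `n` (each row and each
column a permutation of `{1,…,n}`) such that for each `1 ≤ i ≤ n` the
`i × ⌈n/i⌉` rectangles in the top-left and top-right corners contain all `n`
symbols.  Here `⌈n/i⌉ = (n + i - 1) / i`. -/
theorem exists_type12_LRPA (n : ℕ) (hn : 0 < n) :
    ∃ A : ℕ → ℕ → ℕ,
      (∀ i ∈ Finset.Icc 1 n,
        Set.BijOn (A i) ↑(Finset.Icc 1 n) ↑(Finset.Icc 1 n)) ∧
      (∀ j ∈ Finset.Icc 1 n,
        Set.BijOn (fun i => A i j) ↑(Finset.Icc 1 n) ↑(Finset.Icc 1 n)) ∧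
      (∀ i ∈ Finset.Icc 1 n, ∀ s ∈ Finset.Icc 1 n,
        (∃ r ∈ Finset.Icc 1 i, ∃ c ∈ Finset.Icc 1 ((n + i - 1) / i),
            A r c = s) ∧
        (∃ r ∈ Finset.Icc 1 i, ∃ c ∈ Finset.Icc 1 ((n + i - 1) / i),
            A r (n + 1 - c) = s)) := by
  rcases Nat.lt_or_ge n 10 with h | h
  · obtain ⟨m, rfl⟩ : ∃ m, n = m + 1 := ⟨n - 1, by omega⟩
    obtain ⟨B, h1, h2, h3, h4⟩ := LRPA.small m (by omega)
    exact LRPA.interface B h1 h2 (fun j hj hj' => h3 j (by omega) hj)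
      (fun j hj hj' => h4 j (by omega) hj)
  · obtain ⟨A, hA, hC⟩ := LRPA.big h
    refine LRPA.interface (fun r c => A r c) (fun r _ c c' e => (A r).injective e) ?_
      (fun j hj hj' => (hC j hj hj').1) (fun j hj hj' => (hC j hj hj').2)
    intro r hr r' hr' c e
    rcases lt_trichotomy r r' with h1 | h1 | h1
    · exact absurd e (hA r r' h1 hr' c)
    · exact h1
    · exact absurd e.symm (hA r' r h1 hr c)
end
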